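/- arXiv:1512.02670 — 3 statements merged into one kernel-verified Lean document; each statement's English description precedes it below -/
import Mathlib

section
/- There exists an absolute constant c > 0 such that for every finite set A ⊆ ℝ \ {0} with |A| ≥ 2, one has |AA − AA| ≥ c·|A|^(26/17) / (log|A|)^(2/17). -/
open Finset
open scoped Pointwise


/-- Partition of a finite set into `r` consecutive blocks of roughly equal size. -/
lemma exists_blocks (X : Finset ℝ) (r : ℕ) (hr : 1 ≤ r) (hX : r ≤ X.card) :
    ∃ f : ℝ → ℕ, Monotone f ∧ (∀ x ∈ X, f x < r) ∧
      ∀ i, (X.filter (fun x => f x = i)).card * r ≤ 2 * X.card := by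
  set s := X.card / r + 1 with hs
  have hspos : 0 < s := Nat.succ_pos _
  have hmono : Monotone (fun x : ℝ => (X.filter (fun y => y < x)).card) := by
    intro x y hxy
    apply card_le_card
    intro z hz
    simp only [mem_filter] at hz ⊢
    exact ⟨hz.1, hz.2.trans_le hxy⟩
  have hstrict : ∀ x ∈ X, ∀ y ∈ X, x < y →
      (X.filter (fun z => z < x)).card < (X.filter (fun z => z < y)).card := by
    intro x hx y hy hxy
    apply card_lt_card
    refine ⟨fun z hz => ?_, fun h => ?_⟩
    · simp only [mem_filter] at hz ⊢
      exact ⟨hz.1, hz.2.trans hxy⟩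
    · have := h (mem_filter.2 ⟨hx, hxy⟩)
      simp at this
  have hsr : X.card < s * r := by
    have := Nat.lt_div_mul_add (a := X.card) (b := r) (by omega)
    rw [hs, add_mul]; omega
  refine ⟨fun x => (X.filter (fun y => y < x)).card / s, ?_, ?_, ?_⟩
  · intro x y hxy
    exact Nat.div_le_div_right (hmono hxy)
  · intro x hx
    rw [Nat.div_lt_iff_lt_mul hspos]
    have := card_filter_le X (fun y => y < x)
    rw [mul_comm]; exact this.trans_lt hsr
  · intro i
    have h1 : (X.filter (fun x => (X.filter (fun y => y < x)).card / s = i)).card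
        ≤ (Finset.Ico (i * s) (i * s + s)).card := by
      apply card_le_card_of_injOn (fun x => (X.filter (fun y => y < x)).card)
      · intro x hx
        simp only [coe_filter, Set.mem_ofPred_eq] at hx
        have h2 := Nat.div_add_mod (X.filter (fun y => y < x)).card s
        have h3 := Nat.mod_lt (X.filter (fun y => y < x)).card hspos
        rw [hx.2, mul_comm] at h2
        simp only [coe_Ico, Set.mem_Ico]
        omega
      · intro x hx y hy hxy
        simp only [coe_filter, Set.mem_ofPred_eq] at hx hy
        simp only at hxy
        rcases lt_trichotomy x y with h | h | h
        · have := hstrict x hx.1 y hy.1 h; omega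
        · exact h
        · have := hstrict y hy.1 x hx.1 h; omega
    rw [Nat.card_Ico] at h1
    have h2 : (X.filter (fun x => (X.filter (fun y => y < x)).card / s = i)).card ≤ s := by
      rwa [Nat.add_sub_cancel_left] at h1
    calc _ ≤ s * r := Nat.mul_le_mul_right _ h2
      _ = X.card / r * r + r := by rw [hs]; ring
      _ ≤ _ := by have := Nat.div_mul_le_self X.card r; omega

lemma card_le_image_add_pairs {α β : Type*} [DecidableEq α] [DecidableEq β]
    (T : Finset α) (g : α → β) :
    T.card ≤ (T.image g).card +
      ((T ×ˢ T).filter (fun p => p.1 ≠ p.2 ∧ g p.1 = g p.2)).card := by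
  induction T using Finset.induction_on with
  | empty => simp
  | insert a T ha ih =>
    rw [card_insert_of_notMem ha, image_insert]
    have hsub : (T ×ˢ T).filter (fun p => p.1 ≠ p.2 ∧ g p.1 = g p.2) ⊆
        ((insert a T) ×ˢ (insert a T)).filter (fun p => p.1 ≠ p.2 ∧ g p.1 = g p.2) := by
      intro p hp
      simp only [mem_filter, mem_product, mem_insert] at hp ⊢
      tauto
    by_cases h : g a ∈ T.image g
    · rw [insert_eq_of_mem h]
      obtain ⟨b, hb, hab⟩ := mem_image.1 h
      have : ((T ×ˢ T).filter (fun p => p.1 ≠ p.2 ∧ g p.1 = g p.2)).card <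
        (((insert a T) ×ˢ (insert a T)).filter (fun p => p.1 ≠ p.2 ∧ g p.1 = g p.2)).card := by
        apply card_lt_card
        refine ⟨hsub, fun h' => ?_⟩
        have := @h' (a, b) (by
          simp only [mem_filter, mem_product, mem_insert]
          refine ⟨⟨Or.inl trivial, Or.inr hb⟩, ?_, hab.symm⟩
          rintro rfl; exact ha hb)
        simp only [mem_filter, mem_product] at this
        exact ha this.1.1
      omega
    · rw [card_insert_of_notMem h]
      have := card_le_card hsub
      omega

/-- incidences of the line `y = m x + b` with the grid `X × Y`. -/
noncomputable def inc (X Y : Finset ℝ) (l : ℝ × ℝ) : Finset ℝ :=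
  X.filter (fun x => l.1 * x + l.2 ∈ Y)

lemma card_cells_le (X Y : Finset ℝ) (l : ℝ × ℝ) (hl : l.1 ≠ 0) (r : ℕ) (f g : ℝ → ℕ)
    (hf : Monotone f) (hg : Monotone g) (hfr : ∀ x ∈ X, f x < r) (hgr : ∀ x ∈ Y, g x < r) :
    ((inc X Y l).image (fun x => (f x, g (l.1 * x + l.2)))).card ≤ 2 * r := by
  rcases lt_or_gt_of_ne hl with h | h
  · rw [← card_range (2 * r)]
    apply card_le_card_of_injOn (fun p => p.1 + (r - p.2))
    · intro p hp
      simp only [coe_image, Set.mem_image, mem_coe, inc, mem_filter] at hp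
      obtain ⟨x, hx, rfl⟩ := hp
      have := hfr x hx.1
      have := hgr _ hx.2
      simp only [coe_range, Set.mem_Iio]; omega
    · intro p hp q hq hpq
      simp only [coe_image, Set.mem_image, mem_coe, inc, mem_filter] at hp hq
      obtain ⟨x, hx, rfl⟩ := hp
      obtain ⟨y, hy, rfl⟩ := hq
      simp only at hpq
      have := hfr x hx.1
      have := hgr _ hx.2
      have := hfr y hy.1
      have := hgr _ hy.2
      rcases le_total x y with hxy | hxy
      · have h1 := hf hxy
        have h2 : g (l.1 * y + l.2) ≤ g (l.1 * x + l.2) := hg (by nlinarith)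
        ext <;> simp only <;> omega
      · have h1 := hf hxy
        have h2 : g (l.1 * x + l.2) ≤ g (l.1 * y + l.2) := hg (by nlinarith)
        ext <;> simp only <;> omega
  · rw [← card_range (2 * r)]
    apply card_le_card_of_injOn (fun p => p.1 + p.2)
    · intro p hp
      simp only [coe_image, Set.mem_image, mem_coe, inc, mem_filter] at hp
      obtain ⟨x, hx, rfl⟩ := hp
      have := hfr x hx.1
      have := hgr _ hx.2
      simp only [coe_range, Set.mem_Iio]; omega
    · intro p hp q hq hpq
      simp only [coe_image, Set.mem_image, mem_coe, inc, mem_filter] at hp hq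
      obtain ⟨x, hx, rfl⟩ := hp
      obtain ⟨y, hy, rfl⟩ := hq
      simp only at hpq
      rcases le_total x y with hxy | hxy
      · have h1 := hf hxy
        have h2 : g (l.1 * x + l.2) ≤ g (l.1 * y + l.2) := hg (by nlinarith)
        ext <;> simp only <;> omega
      · have h1 := hf hxy
        have h2 : g (l.1 * y + l.2) ≤ g (l.1 * x + l.2) := hg (by nlinarith)
        ext <;> simp only <;> omega

/-- Cell decomposition incidence bound for grids. -/
lemma grid_incidence (X Y : Finset ℝ) (L : Finset (ℝ × ℝ)) (hL : ∀ l ∈ L, l.1 ≠ 0)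
    (r : ℕ) (hr : 1 ≤ r) (hX : r ≤ X.card) (hY : r ≤ Y.card) :
    r ^ 2 * ∑ l ∈ L, (inc X Y l).card ≤ 2 * r ^ 3 * L.card + 4 * X.card ^ 2 * Y.card ^ 2 := by
  obtain ⟨f, hf, hfr, hfX⟩ := exists_blocks X r hr hX
  obtain ⟨g, hg, hgr, hgY⟩ := exists_blocks Y r hr hY
  set pr : ℝ × ℝ → Finset (ℝ × ℝ) := fun l =>
    ((inc X Y l) ×ˢ (inc X Y l)).filter (fun p => p.1 ≠ p.2 ∧
      (f p.1, g (l.1 * p.1 + l.2)) = (f p.2, g (l.1 * p.2 + l.2))) with hpr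
  have h1 : ∑ l ∈ L, (inc X Y l).card ≤ ∑ l ∈ L, (2 * r + (pr l).card) := by
    apply sum_le_sum
    intro l hl
    have h2 := card_le_image_add_pairs (inc X Y l) (fun x => (f x, g (l.1 * x + l.2)))
    have h3 := card_cells_le X Y l (hL l hl) r f g hf hg hfr hgr
    simp only [hpr]
    omega
  -- all pairs of points in a common cell
  have h4 : ∑ l ∈ L, (pr l).card ≤
      ((X ×ˢ Y).sigma (fun p => (X.filter (fun x => f x = f p.1)) ×ˢ
        (Y.filter (fun y => g y = g p.2)))).card := by
    rw [← card_sigma]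
    apply card_le_card_of_injOn
      (fun z : (_ : ℝ × ℝ) × (ℝ × ℝ) =>
        (⟨(z.2.1, z.1.1 * z.2.1 + z.1.2), (z.2.2, z.1.1 * z.2.2 + z.1.2)⟩ :
          (_ : ℝ × ℝ) × (ℝ × ℝ)))
    · rintro ⟨l, p⟩ hz
      simp only [coe_sigma, Set.mem_sigma_iff, mem_coe, hpr, mem_filter, mem_product, inc,
        Prod.mk.injEq] at hz ⊢
      tauto
    · rintro ⟨⟨m, b⟩, ⟨x, y⟩⟩ hz ⟨⟨m', b'⟩, ⟨x', y'⟩⟩ hz' h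
      simp only [coe_sigma, Set.mem_sigma_iff, mem_coe, hpr, mem_filter, mem_product, inc,
        Prod.mk.injEq, Sigma.mk.injEq, heq_eq_eq] at hz hz' h ⊢
      obtain ⟨⟨rfl, h2⟩, rfl, h3⟩ := h
      have hne : x - y ≠ 0 := sub_ne_zero.2 hz.2.2.1
      have hm : m = m' := by
        apply mul_right_cancel₀ hne; linarith
      subst hm
      refine ⟨⟨rfl, by linarith⟩, rfl, rfl⟩
  have h5 : r ^ 2 * ((X ×ˢ Y).sigma (fun p => (X.filter (fun x => f x = f p.1)) ×ˢ
        (Y.filter (fun y => g y = g p.2)))).card ≤ 4 * X.card ^ 2 * Y.card ^ 2 := by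
    rw [card_sigma, mul_sum]
    calc _ ≤ ∑ p ∈ X ×ˢ Y, (2 * X.card) * (2 * Y.card) := by
          apply sum_le_sum
          intro p _
          rw [card_product]
          calc _ = ((X.filter (fun x => f x = f p.1)).card * r) *
                ((Y.filter (fun y => g y = g p.2)).card * r) := by ring
            _ ≤ _ := Nat.mul_le_mul (hfX _) (hgY _)
      _ = _ := by rw [sum_const, card_product, smul_eq_mul]; ring
  rw [sum_add_distrib, sum_const, smul_eq_mul] at h1
  calc _ ≤ r ^ 2 * (L.card * (2 * r) + ∑ l ∈ L, (pr l).card) := Nat.mul_le_mul_left _ h1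
    _ = 2 * r ^ 3 * L.card + r ^ 2 * ∑ l ∈ L, (pr l).card := by ring
    _ ≤ _ := Nat.add_le_add_left ((Nat.mul_le_mul_left _ h4).trans h5) _

lemma inc_card_le_right (X Y : Finset ℝ) (l : ℝ × ℝ) (hl : l.1 ≠ 0) :
    (inc X Y l).card ≤ Y.card := by
  apply card_le_card_of_injOn (fun x => l.1 * x + l.2)
  · intro x hx
    simp only [inc, coe_filter, Set.mem_ofPred_eq] at hx
    exact hx.2
  · intro x _ y _ h
    simp only at h
    apply mul_left_cancel₀ hl; linarith

lemma rich_lines (X Y : Finset ℝ) (L : Finset (ℝ × ℝ)) (hL : ∀ l ∈ L, l.1 ≠ 0)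
    (t : ℕ) (ht : 4 ≤ t) (hrich : ∀ l ∈ L, t ≤ (inc X Y l).card) :
    L.card * t ^ 3 ≤ 512 * X.card ^ 2 * Y.card ^ 2 := by
  rcases L.eq_empty_or_nonempty with rfl | ⟨l0, hl0⟩
  · simp
  set r := t / 4 with hr
  have h4 : 4 * r ≤ t := by omega
  have h8 : t ≤ 8 * r := by omega
  have hX : t ≤ X.card := (hrich l0 hl0).trans (card_filter_le _ _)
  have hY : t ≤ Y.card := (hrich l0 hl0).trans (inc_card_le_right _ _ _ (hL _ hl0))
  have h := grid_incidence X Y L hL r (by omega) (by omega) (by omega)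
  have h2 : L.card * t ≤ ∑ l ∈ L, (inc X Y l).card := by
    rw [← smul_eq_mul, ← sum_const]; exact sum_le_sum hrich
  have h3 : r ^ 2 * (L.card * t) ≤ 2 * r ^ 3 * L.card + 4 * X.card ^ 2 * Y.card ^ 2 :=
    (Nat.mul_le_mul_left _ h2).trans h
  have h5 : 4 * r * (r ^ 2 * L.card) ≤ t * (r ^ 2 * L.card) := Nat.mul_le_mul_right _ h4
  have h6 : r ^ 2 * (L.card * t) ≤ 8 * X.card ^ 2 * Y.card ^ 2 := by nlinarith
  have h7 : t ^ 2 ≤ (8 * r) ^ 2 := Nat.pow_le_pow_left h8 2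
  calc L.card * t ^ 3 = t ^ 2 * (L.card * t) := by ring
    _ ≤ (8 * r) ^ 2 * (L.card * t) := Nat.mul_le_mul_right _ h7
    _ = 64 * (r ^ 2 * (L.card * t)) := by ring
    _ ≤ 64 * (8 * X.card ^ 2 * Y.card ^ 2) := Nat.mul_le_mul_left _ h6
    _ = _ := by ring

/-- `b ∈ B` with `x + b ∈ A`; its size is the number of representations of `x` in `A - B`. -/
noncomputable def rp (A B : Finset ℝ) (x : ℝ) : Finset ℝ := B.filter (fun b => x + b ∈ A)

lemma mem_rp {A B : Finset ℝ} {x b : ℝ} : b ∈ rp A B x ↔ b ∈ B ∧ x + b ∈ A := by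
  simp [rp]

lemma card_le_quot (A : Finset ℝ) (h0 : (0 : ℝ) ∉ A) (hA : A.Nonempty) :
    A.card ≤ (A / A).card := by
  obtain ⟨a, ha⟩ := hA
  apply card_le_card_of_injOn (fun x => x / a)
  · intro x hx
    exact div_mem_div hx ha
  · intro x _ y _ h
    have : a ≠ 0 := fun h => h0 (h ▸ ha)
    exact (div_left_inj' this).1 h

lemma popular_bound (A B : Finset ℝ) (h0 : (0 : ℝ) ∉ A) (hA : A.Nonempty) (hB : B.Nonempty)
    (t : ℕ) (ht : 1 ≤ t) :
    A.card * ((A - B).filter (fun x => t ≤ (rp A B x).card)).card * t ^ 3 ≤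
      512 * (A / A).card ^ 2 * B.card ^ 2 := by
  set S := (A - B).filter (fun x => t ≤ (rp A B x).card) with hS
  by_cases h4 : 4 ≤ t
  · have h := rich_lines (A / A) B ((A ×ˢ S).image (fun p => (p.1, -p.2))) ?_ t h4 ?_
    · rw [card_image_of_injective, card_product] at h
      · exact h
      · rintro ⟨a, b⟩ ⟨c, d⟩ h
        simpa using h
    · intro l hl
      simp only [mem_image, mem_product] at hl
      obtain ⟨p, hp, rfl⟩ := hl
      exact fun h => h0 (by simpa [← h] using hp.1)
    · intro l hl
      simp only [mem_image, mem_product] at hl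
      obtain ⟨⟨c, x⟩, hp, rfl⟩ := hl
      have hc : c ≠ 0 := fun h => h0 (h ▸ hp.1)
      refine (mem_filter.1 hp.2).2.trans ?_
      apply card_le_card_of_injOn (fun b => (x + b) / c)
      · intro b hb
        have hb := mem_rp.1 (mem_coe.1 hb)
        simp only [inc, coe_filter, Set.mem_ofPred_eq]
        refine ⟨div_mem_div hb.2 hp.1, ?_⟩
        have : c * ((x + b) / c) + -x = b := by field_simp; ring
        rw [this]; exact hb.1
      · intro b _ b' _ h
        have := (div_left_inj' hc).1 h
        linarith
  · have h1 : S.card ≤ A.card * B.card := (card_filter_le _ _).trans (card_sub_le)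
    have h2 := card_le_quot A h0 hA
    have h3 : 1 ≤ B.card := hB.card_pos
    have h5 : t ^ 3 ≤ 3 ^ 3 := Nat.pow_le_pow_left (by omega) 3
    calc A.card * S.card * t ^ 3 ≤ A.card * (A.card * B.card) * 3 ^ 3 := by gcongr
      _ = 27 * A.card ^ 2 * (B.card * 1) := by ring
      _ ≤ 512 * (A / A).card ^ 2 * (B.card * B.card) := by gcongr; norm_num
      _ = _ := by ring

lemma sum_rp (A B : Finset ℝ) : ∑ x ∈ A - B, (rp A B x).card = A.card * B.card := by
  rw [← card_sigma, ← card_product]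
  refine card_bij' (fun z _ => (z.1 + z.2, z.2)) (fun p _ => ⟨p.1 - p.2, p.2⟩) ?_ ?_ ?_ ?_
  · rintro ⟨x, b⟩ h
    simp only [mem_sigma, mem_rp] at h
    simp only [mem_product]; tauto
  · rintro ⟨a, b⟩ h
    simp only [mem_product] at h
    simp only [mem_sigma, mem_rp, sub_add_cancel]
    exact ⟨sub_mem_sub h.1 h.2, h.2, h.1⟩
  · rintro ⟨x, b⟩ h; simp
  · rintro ⟨a, b⟩ h; simp

lemma amgm3 (p q r y : ℝ) (hp : 0 ≤ p) (hq : 0 ≤ q) (hr : 0 ≤ r) (h : y ^ 3 ≤ p * q * r) :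
    3 * y ≤ p + q + r := by
  by_contra! hlt
  have h1 : (p + q + r) ^ 3 < (3 * y) ^ 3 := by gcongr
  have h2 : 27 * (p * q * r) ≤ (p + q + r) ^ 3 := by
    nlinarith [mul_nonneg hp (sq_nonneg (q - r)), mul_nonneg hq (sq_nonneg (p - r)),
      mul_nonneg hr (sq_nonneg (p - q)), mul_nonneg (add_nonneg (add_nonneg hp hq) hr) (sq_nonneg (q - r)),
      mul_nonneg (add_nonneg (add_nonneg hp hq) hr) (sq_nonneg (p - r)),
      mul_nonneg (add_nonneg (add_nonneg hp hq) hr) (sq_nonneg (p - q))]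
  nlinarith

lemma holder3 {ι : Type*} (s : Finset ι) (x f g h : ι → ℝ)
    (hx : ∀ i ∈ s, 0 ≤ x i) (hf : ∀ i ∈ s, 0 ≤ f i) (hg : ∀ i ∈ s, 0 ≤ g i)
    (hh : ∀ i ∈ s, 0 ≤ h i) (H : ∀ i ∈ s, x i ^ 3 ≤ f i * g i * h i) :
    (∑ i ∈ s, x i) ^ 3 ≤ (∑ i ∈ s, f i) * (∑ i ∈ s, g i) * (∑ i ∈ s, h i) := by
  classical
  induction s using Finset.induction_on with
  | empty => simp
  | insert a s ha ih =>
    rw [sum_insert ha, sum_insert ha, sum_insert ha, sum_insert ha]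
    have ih := ih (fun i hi => hx i (mem_insert_of_mem hi)) (fun i hi => hf i (mem_insert_of_mem hi))
      (fun i hi => hg i (mem_insert_of_mem hi)) (fun i hi => hh i (mem_insert_of_mem hi))
      (fun i hi => H i (mem_insert_of_mem hi))
    have X0 := sum_nonneg (fun i hi => hx i (mem_insert_of_mem hi))
    have F0 := sum_nonneg (fun i hi => hf i (mem_insert_of_mem hi))
    have G0 := sum_nonneg (fun i hi => hg i (mem_insert_of_mem hi))
    have H0 := sum_nonneg (fun i hi => hh i (mem_insert_of_mem hi))
    have x0 := hx a (mem_insert_self _ _)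
    have f0 := hf a (mem_insert_self _ _)
    have g0 := hg a (mem_insert_self _ _)
    have h0 := hh a (mem_insert_self _ _)
    have H1 := H a (mem_insert_self _ _)
    generalize (∑ i ∈ s, x i) = X at *
    generalize (∑ i ∈ s, f i) = F at *
    generalize (∑ i ∈ s, g i) = G at *
    generalize (∑ i ∈ s, h i) = K at *
    generalize x a = x at *
    generalize f a = f at *
    generalize g a = g at *
    generalize h a = h at *
    have e1 : 3 * (X ^ 2 * x) ≤ F * G * h + F * g * K + f * G * K := by
      apply amgm3 _ _ _ _ (by positivity) (by positivity) (by positivity)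
      calc (X ^ 2 * x) ^ 3 = (X ^ 3) ^ 2 * x ^ 3 := by ring
        _ ≤ (F * G * K) ^ 2 * (f * g * h) := by gcongr
        _ = _ := by ring
    have e2 : 3 * (x ^ 2 * X) ≤ f * g * K + f * G * h + F * g * h := by
      apply amgm3 _ _ _ _ (by positivity) (by positivity) (by positivity)
      calc (x ^ 2 * X) ^ 3 = (x ^ 3) ^ 2 * X ^ 3 := by ring
        _ ≤ (f * g * h) ^ 2 * (F * G * K) := by gcongr
        _ = _ := by ring
    nlinarith

set_option maxHeartbeats 1000000 in
/-- `|A|^8 ≤ |A - A| E(A, A - A) E_3(A)`. -/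
lemma energy_main (A : Finset ℝ) :
    (A.card : ℝ) ^ 8 ≤ ((A - A).card : ℝ) * (∑ x ∈ A - (A - A), ((rp A (A - A) x).card : ℝ) ^ 2) *
      (∑ x ∈ A - A, ((rp A A x).card : ℝ) ^ 3) := by
  set D := A - A with hD
  set E : ℝ → Finset ((_ : ℝ) × (ℝ × ℝ) × (ℝ × ℝ)) := fun s =>
    ((rp A A s) - A).sigma (fun z =>
      ((rp A A s ×ˢ A).filter (fun p => p.1 - p.2 = z)) ×ˢ
      ((rp A A s ×ˢ A).filter (fun p => p.1 - p.2 = z))) with hE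
  -- Cauchy-Schwarz
  have hCS : ∀ s, ((rp A A s).card * A.card) ^ 2 ≤ (rp A A s - A).card * (E s).card := by
    intro s
    have h1 : (rp A A s).card * A.card =
        ∑ z ∈ rp A A s - A, ((rp A A s ×ˢ A).filter (fun p => p.1 - p.2 = z)).card := by
      rw [← card_product]
      apply card_eq_sum_card_fiberwise
      intro p hp
      have hp := mem_product.1 (mem_coe.1 hp)
      exact mem_coe.2 (sub_mem_sub hp.1 hp.2)
    rw [h1, hE]
    simp only [card_sigma, card_product]
    have := sq_sum_le_card_mul_sum_sq (s := rp A A s - A)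
      (f := fun z => ((rp A A s ×ˢ A).filter (fun p => p.1 - p.2 = z)).card)
    simpa only [sq, Nat.cast_id] using this
  have hE3 : ∑ s ∈ D, (E s).card ≤ ∑ x ∈ D, (rp A A x).card ^ 3 := by
    have : ∀ x, (rp A A x).card ^ 3 = (rp A A x ×ˢ rp A A x ×ˢ rp A A x).card := by
      intro x; rw [card_product, card_product]; ring
    simp only [this]
    rw [← card_sigma, ← card_sigma]
    apply card_le_card_of_injOn
      (fun w => (⟨w.2.2.1.1 - w.2.2.2.1, w.2.2.2.1, w.2.2.2.1 + w.1, w.2.2.2.2⟩ :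
        (_ : ℝ) × ℝ × ℝ × ℝ))
    · rintro ⟨s, z, ⟨b, a⟩, ⟨b', a'⟩⟩ hw
      simp only [hE, coe_sigma, Set.mem_sigma_iff, mem_coe, mem_product, mem_filter,
        mem_rp] at hw ⊢
      obtain ⟨_, _, ⟨⟨⟨h1, h2⟩, h3⟩, h4⟩, ⟨⟨h5, h6⟩, h7⟩, h8⟩ := hw
      have e1 : b - b' + b' = b := by ring
      have e2 : b - b' + (b' + s) = s + b := by ring
      have e3 : b - b' + a' = a := by linarith
      have e4 : b' + s = s + b' := by ring
      rw [e1, e2, e3, e4]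
      exact ⟨sub_mem_sub h1 h5, ⟨h5, h1⟩, ⟨h6, h2⟩, h7, h3⟩
    · rintro ⟨s, z, ⟨b, a⟩, ⟨b', a'⟩⟩ hw ⟨s₂, z₂, ⟨b₂, a₂⟩, ⟨b₂', a₂'⟩⟩ hw' h
      simp only [hE, coe_sigma, Set.mem_sigma_iff, mem_coe, mem_product, mem_filter,
        mem_rp, Prod.mk.injEq, Sigma.mk.injEq, heq_eq_eq] at hw hw' h ⊢
      obtain ⟨_, _, ⟨_, h4⟩, ⟨_, h8⟩⟩ := hw
      obtain ⟨_, _, ⟨_, h4'⟩, ⟨_, h8'⟩⟩ := hw'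
      obtain ⟨k1, k2, k3, k4⟩ := h
      refine ⟨?_, ?_, ⟨?_, ?_⟩, ?_, ?_⟩ <;> linarith
  have hE2 : ∑ s ∈ D, (rp A A s).card * (rp A A s - A).card ≤
      ∑ x ∈ A - D, (rp A D x).card ^ 2 := by
    simp only [sq, ← card_product]
    rw [← card_sigma, ← card_sigma]
    apply card_le_card_of_injOn
      (fun w => (⟨w.2.1 - w.2.2, w.2.2, w.2.2 + w.1⟩ : (_ : ℝ) × ℝ × ℝ))
    · rintro ⟨s, b, t⟩ hw
      simp only [coe_sigma, Set.mem_sigma_iff, mem_coe, mem_product, mem_rp] at hw ⊢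
      obtain ⟨hs, ⟨hb, hsb⟩, ht⟩ := hw
      obtain ⟨c, hc, d, hd, rfl⟩ := mem_sub.1 ht
      rw [mem_rp] at hc
      have e1 : b - (c - d) + (c - d) = b := by ring
      have e2 : b - (c - d) + (c - d + s) = s + b := by ring
      have e3 : c - d + s = (s + c) - d := by ring
      have m1 : c - d ∈ D := sub_mem_sub hc.1 hd
      have m2 : c - d + s ∈ D := by rw [e3]; exact sub_mem_sub hc.2 hd
      rw [e1, e2]
      exact ⟨sub_mem_sub hb m1, ⟨m1, hb⟩, m2, hsb⟩
    · rintro ⟨s, b, t⟩ hw ⟨s', b', t'⟩ hw' h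
      simp only [Prod.mk.injEq, Sigma.mk.injEq, heq_eq_eq] at h ⊢
      obtain ⟨k1, k2, k3⟩ := h
      refine ⟨?_, ?_, ?_⟩ <;> linarith
  have hsum : ∑ s ∈ D, (rp A A s).card = A.card * A.card := sum_rp A A
  clear_value E
  clear_value D
  by_cases hA : A.card = 0
  · have hz : (A.card : ℝ) ^ 8 = 0 := by rw [hA, Nat.cast_zero, zero_pow (by norm_num)]
    rw [hz]
    exact mul_nonneg (mul_nonneg (Nat.cast_nonneg _) (sum_nonneg fun _ _ => sq_nonneg _))
      (sum_nonneg fun _ _ => pow_nonneg (Nat.cast_nonneg _) _)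
  have hApos : (0 : ℝ) < A.card := by exact_mod_cast Nat.pos_of_ne_zero hA
  have hH := holder3 D (fun s => ((rp A A s).card : ℝ)) (fun _ => 1)
    (fun s => ((rp A A s).card : ℝ) * ((rp A A s - A).card : ℝ))
    (fun s => ((E s).card : ℝ) / (A.card : ℝ) ^ 2)
    (fun _ _ => Nat.cast_nonneg _) (fun _ _ => zero_le_one)
    (fun _ _ => mul_nonneg (Nat.cast_nonneg _) (Nat.cast_nonneg _))
    (fun _ _ => div_nonneg (Nat.cast_nonneg _) (sq_nonneg _)) (by
      intro s _
      have h : (((rp A A s).card : ℝ) * A.card) ^ 2 ≤ (rp A A s - A).card * (E s).card := by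
        exact_mod_cast hCS s
      rw [one_mul, ← mul_div_assoc, le_div_iff₀ (pow_pos hApos 2)]
      have h' := mul_le_mul_of_nonneg_left h (Nat.cast_nonneg (α := ℝ) (rp A A s).card)
      linarith)
  rw [← sum_div] at hH
  have hE3' : ∑ s ∈ D, ((E s).card : ℝ) ≤ ∑ x ∈ D, ((rp A A x).card : ℝ) ^ 3 := by
    exact_mod_cast hE3
  have hE2' : ∑ s ∈ D, ((rp A A s).card : ℝ) * ((rp A A s - A).card : ℝ) ≤
      ∑ x ∈ A - D, ((rp A D x).card : ℝ) ^ 2 := by exact_mod_cast hE2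
  have hsum' : ∑ s ∈ D, ((rp A A s).card : ℝ) = A.card * A.card := by exact_mod_cast hsum
  rw [hsum', sum_const, nsmul_eq_mul, mul_one, ← mul_div_assoc, le_div_iff₀ (pow_pos hApos 2)] at hH
  calc (A.card : ℝ) ^ 8 = (A.card * A.card) ^ 3 * (A.card : ℝ) ^ 2 := by ring
    _ ≤ _ := hH
    _ ≤ _ := mul_le_mul (mul_le_mul_of_nonneg_left hE2' (Nat.cast_nonneg _)) hE3'
      (sum_nonneg fun _ _ => Nat.cast_nonneg _)
      (mul_nonneg (Nat.cast_nonneg _) (sum_nonneg fun _ _ => sq_nonneg _))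

lemma layer3 {ι : Type*} (T : Finset ι) (r : ι → ℕ) (K : ℝ) (n : ℕ)
    (hr : ∀ x ∈ T, r x ≤ n)
    (hK : ∀ t : ℕ, 1 ≤ t → ((T.filter (fun x => t ≤ r x)).card : ℝ) * (t : ℝ) ^ 3 ≤ K) :
    ∑ x ∈ T, (r x : ℝ) ^ 3 ≤ 3 * K * (1 + Real.log n) := by
  have hK0 : 0 ≤ K := le_trans (by positivity) (hK 1 le_rfl)
  have h1 : ∀ m : ℕ, (m : ℝ) ^ 3 ≤ ∑ t ∈ Icc 1 m, 3 * (t : ℝ) ^ 2 := by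
    intro m
    induction m with
    | zero => simp
    | succ m ih =>
      rw [sum_Icc_succ_top (by omega)]
      push_cast
      have : (0 : ℝ) ≤ m := Nat.cast_nonneg _
      nlinarith
  calc ∑ x ∈ T, (r x : ℝ) ^ 3 ≤ ∑ x ∈ T, ∑ t ∈ Icc 1 n, if t ≤ r x then 3 * (t : ℝ) ^ 2 else 0 := by
        apply sum_le_sum
        intro x hx
        refine (h1 (r x)).trans (le_of_eq ?_)
        rw [← sum_filter]
        congr 1
        ext t
        have := hr x hx
        simp only [mem_Icc, mem_filter]; omega
    _ = ∑ t ∈ Icc 1 n, ((T.filter (fun x => t ≤ r x)).card : ℝ) * (3 * (t : ℝ) ^ 2) := by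
        rw [sum_comm]
        apply sum_congr rfl
        intro t _
        rw [← sum_filter, sum_const, nsmul_eq_mul]
    _ ≤ ∑ t ∈ Icc 1 n, 3 * K * (t : ℝ)⁻¹ := by
        apply sum_le_sum
        intro t ht
        have ht1 := (mem_Icc.1 ht).1
        have := hK t ht1
        have ht0 : (0 : ℝ) < t := by exact_mod_cast ht1
        rw [← div_eq_mul_inv, le_div_iff₀ ht0]
        nlinarith
    _ = 3 * K * (harmonic n : ℝ) := by
        rw [← mul_sum, harmonic_eq_sum_Icc]; push_cast; rfl
    _ ≤ _ := by
        have := harmonic_le_one_add_log n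
        gcongr

lemma layer2 {ι : Type*} (T : Finset ι) (r : ι → ℕ) (K N : ℝ) (hN : 0 < N) (hNK : N ≤ K)
    (hs : ∑ x ∈ T, (r x : ℝ) ≤ N)
    (hK : ∀ t : ℕ, 1 ≤ t → ((T.filter (fun x => t ≤ r x)).card : ℝ) * (t : ℝ) ^ 3 ≤ K) :
    (∑ x ∈ T, (r x : ℝ) ^ 2) ^ 2 ≤ 36 * K * N := by
  have hK0 : 0 < K := hN.trans_le hNK
  have h1 : ∀ m : ℕ, (m : ℝ) ^ 2 ≤ ∑ t ∈ Icc 1 m, 2 * (t : ℝ) := by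
    intro m
    induction m with
    | zero => simp
    | succ m ih =>
      rw [sum_Icc_succ_top (by omega)]
      push_cast
      have : (0 : ℝ) ≤ m := Nat.cast_nonneg _
      nlinarith
  set q := Real.sqrt (K / N) with hq
  have hq1 : 1 ≤ q := by
    rw [hq, Real.one_le_sqrt, one_le_div hN]; exact hNK
  have hqq : q ^ 2 * N = K := by
    rw [hq, Real.sq_sqrt (by positivity)]; field_simp
  set d := ⌈q⌉₊ with hd
  have hd1 : q ≤ d := Nat.le_ceil _
  have hd2 : (d : ℝ) ≤ 2 * q := by
    have := Nat.ceil_lt_add_one (show 0 ≤ q by linarith)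
    linarith
  have hdpos : 1 ≤ d := by
    have : (1 : ℝ) ≤ d := hq1.trans hd1
    exact_mod_cast this
  set n := d + T.sup r with hn
  have hr : ∀ x ∈ T, r x ≤ n := fun x hx => (le_sup (f := r) hx).trans (by omega)
  have hcheb : ∀ t : ℕ, ((T.filter (fun x => t ≤ r x)).card : ℝ) * t ≤ N := by
    intro t
    refine le_trans ?_ hs
    rw [← nsmul_eq_mul, ← sum_const]
    calc _ ≤ ∑ x ∈ T.filter (fun x => t ≤ r x), (r x : ℝ) := by
          apply sum_le_sum; intro x hx
          exact_mod_cast (mem_filter.1 hx).2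
      _ ≤ _ := sum_le_sum_of_subset_of_nonneg (filter_subset _ _) (fun _ _ _ => Nat.cast_nonneg _)
  have main : ∑ x ∈ T, (r x : ℝ) ^ 2 ≤ 2 * N * d + 2 * K * (d : ℝ)⁻¹ := by
    calc ∑ x ∈ T, (r x : ℝ) ^ 2 ≤ ∑ x ∈ T, ∑ t ∈ Icc 1 n, if t ≤ r x then 2 * (t : ℝ) else 0 := by
          apply sum_le_sum
          intro x hx
          refine (h1 (r x)).trans (le_of_eq ?_)
          rw [← sum_filter]
          congr 1
          ext t
          have := hr x hx
          simp only [mem_Icc, mem_filter]; omega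
      _ = ∑ t ∈ Icc 1 n, ((T.filter (fun x => t ≤ r x)).card : ℝ) * (2 * (t : ℝ)) := by
          rw [sum_comm]
          apply sum_congr rfl
          intro t _
          rw [← sum_filter, sum_const, nsmul_eq_mul]
      _ = ∑ t ∈ Icc 1 d, ((T.filter (fun x => t ≤ r x)).card : ℝ) * (2 * (t : ℝ)) +
          ∑ t ∈ Ioc d n, ((T.filter (fun x => t ≤ r x)).card : ℝ) * (2 * (t : ℝ)) := by
          rw [← sum_union]
          · congr 1
            ext t; simp only [mem_Icc, mem_union, mem_Ioc]; omega
          · rw [disjoint_left]; intro t; simp only [mem_Icc, mem_Ioc]; omega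
      _ ≤ ∑ t ∈ Icc 1 d, 2 * N + ∑ t ∈ Ioc d n, 2 * K * ((t : ℝ) ^ 2)⁻¹ := by
          apply add_le_add
          · apply sum_le_sum
            intro t _
            have := hcheb t
            linarith
          · apply sum_le_sum
            intro t ht
            have ht1 : 1 ≤ t := by have := (mem_Ioc.1 ht).1; omega
            have := hK t ht1
            have ht0 : (0 : ℝ) < t := by exact_mod_cast ht1
            rw [← div_eq_mul_inv, le_div_iff₀ (by positivity)]
            nlinarith
      _ ≤ _ := by
          rw [sum_const, Nat.card_Icc, nsmul_eq_mul, ← mul_sum]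
          have h := sum_Ioc_inv_sq_le_sub (α := ℝ) (k := d) (n := n) (by omega) (by omega)
          have h2 : (0 : ℝ) ≤ (n : ℝ)⁻¹ := by positivity
          have h3 : ∑ t ∈ Ioc d n, ((t : ℝ) ^ 2)⁻¹ ≤ (d : ℝ)⁻¹ := by linarith
          have h4 := mul_le_mul_of_nonneg_left h3 (show 0 ≤ 2 * K by positivity)
          have h5 : ((d + 1 - 1 : ℕ) : ℝ) = d := by simp
          rw [h5]; linarith
  have hinv : (d : ℝ)⁻¹ ≤ q⁻¹ := by gcongr
  have hfin : ∑ x ∈ T, (r x : ℝ) ^ 2 ≤ 6 * (N * q) := by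
    have e : K * q⁻¹ = N * q := by rw [← hqq]; field_simp
    have e2 : K * (d : ℝ)⁻¹ ≤ K * q⁻¹ := by gcongr
    have e3 : N * d ≤ N * (2 * q) := by gcongr
    linarith
  calc _ ≤ (6 * (N * q)) ^ 2 := by gcongr
    _ = 36 * (q ^ 2 * N) * N := by ring
    _ = _ := by rw [hqq]

/-- `|A - A|^5 |A / A|^6 ≫ |A|^14 / log^2`. -/
lemma diff_quot : ∃ C : ℝ, 0 < C ∧ ∀ A : Finset ℝ, (0 : ℝ) ∉ A → 2 ≤ A.card →
    (A.card : ℝ) ^ 14 ≤ C * ((A - A).card : ℝ) ^ 5 * ((A / A).card : ℝ) ^ 6 *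
      (Real.log A.card) ^ 2 := by
  refine ⟨(3 * 512) ^ 2 * (36 * 512) * 9, by norm_num, ?_⟩
  intro A h0 h2
  have hA : A.Nonempty := card_pos.1 (by omega)
  have hD : (A - A).Nonempty := hA.sub hA
  have E := energy_main A
  have hrl : ∀ x, (rp A A x).card ≤ A.card := fun x => card_filter_le _ _
  have haq := card_le_quot A h0 hA
  have hs2 := sum_rp A (A - A)
  have p3 := popular_bound A A h0 hA hA
  have p2 := popular_bound A (A - A) h0 hA hD
  have hDpos : 0 < (A - A).card := hD.card_pos
  generalize hDg : A - A = D at *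
  have ha1 : (2 : ℝ) ≤ A.card := by exact_mod_cast h2
  have ha0 : (0 : ℝ) < A.card := by linarith
  have haq' : (A.card : ℝ) ≤ (A / A).card := by exact_mod_cast haq
  have hd1 : (1 : ℝ) ≤ D.card := by exact_mod_cast hDpos
  have L3 := layer3 D (fun x => (rp A A x).card) (512 * ((A / A).card : ℝ) ^ 2 * A.card) A.card
    (fun x _ => hrl x) (by
      intro t ht
      have h : (A.card : ℝ) * ((D.filter (fun x => t ≤ (rp A A x).card)).card : ℝ) * (t : ℝ) ^ 3 ≤
        512 * ((A / A).card : ℝ) ^ 2 * (A.card : ℝ) ^ 2 := by exact_mod_cast p3 t ht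
      refine le_of_mul_le_mul_left ?_ ha0
      linarith)
  have L2 := layer2 (A - D) (fun x => (rp A D x).card)
    (512 * ((A / A).card : ℝ) ^ 2 * (D.card : ℝ) ^ 2 / A.card) (A.card * D.card)
    (by nlinarith) (by
      rw [le_div_iff₀ ha0]
      have e1 : (A.card : ℝ) ^ 2 ≤ ((A / A).card : ℝ) ^ 2 := pow_le_pow_left₀ ha0.le haq' 2
      have e2 : (D.card : ℝ) ≤ (D.card : ℝ) ^ 2 := by nlinarith
      have e3 : (A.card : ℝ) ^ 2 * D.card ≤ ((A / A).card : ℝ) ^ 2 * (D.card : ℝ) ^ 2 :=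
        mul_le_mul e1 e2 (by linarith) (sq_nonneg _)
      have e4 : 0 ≤ ((A / A).card : ℝ) ^ 2 * (D.card : ℝ) ^ 2 := mul_nonneg (sq_nonneg _) (sq_nonneg _)
      nlinarith)
    (by exact_mod_cast hs2.le) (by
      intro t ht
      have h : (A.card : ℝ) * (((A - D).filter (fun x => t ≤ (rp A D x).card)).card : ℝ) * (t : ℝ) ^ 3 ≤
        512 * ((A / A).card : ℝ) ^ 2 * (D.card : ℝ) ^ 2 := by exact_mod_cast p2 t ht
      rw [le_div_iff₀ ha0]
      linarith)
  have hlog : 1 + Real.log A.card ≤ 3 * Real.log A.card := by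
    have h1 : Real.log 2 ≤ Real.log A.card := Real.log_le_log (by norm_num) ha1
    have := Real.log_two_gt_d9
    linarith
  have hlog0 : 0 ≤ Real.log A.card := Real.log_nonneg (by linarith)
  have hE2 : 0 ≤ ∑ x ∈ A - D, ((rp A D x).card : ℝ) ^ 2 := sum_nonneg fun _ _ => sq_nonneg _
  have hE3 : 0 ≤ ∑ x ∈ D, ((rp A A x).card : ℝ) ^ 3 :=
    sum_nonneg fun _ _ => pow_nonneg (Nat.cast_nonneg _) _
  have hQ0 : (0 : ℝ) ≤ (A / A).card := by linarith
  generalize (∑ x ∈ A - D, ((rp A D x).card : ℝ) ^ 2) = E2 at *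
  generalize (∑ x ∈ D, ((rp A A x).card : ℝ) ^ 3) = E3 at *
  generalize ((A / A).card : ℝ) = Q at *
  generalize (D.card : ℝ) = d at *
  generalize Real.log (A.card : ℝ) = l at *
  generalize (A.card : ℝ) = a at *
  have L3' : E3 ≤ 3 * (512 * Q ^ 2 * a) * (3 * l) := by
    refine L3.trans ?_
    gcongr
  have L2' : E2 ^ 2 ≤ 36 * 512 * Q ^ 2 * d ^ 3 := by
    refine L2.trans (le_of_eq ?_)
    field_simp
  have key : a ^ 14 * a ^ 2 ≤ ((3 * 512) ^ 2 * (36 * 512) * 9 * d ^ 5 * Q ^ 6 * l ^ 2) * a ^ 2 := by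
    calc a ^ 14 * a ^ 2 = (a ^ 8) ^ 2 := by ring
      _ ≤ (d * E2 * E3) ^ 2 := by gcongr
      _ = d ^ 2 * E2 ^ 2 * E3 ^ 2 := by ring
      _ ≤ d ^ 2 * (36 * 512 * Q ^ 2 * d ^ 3) * (3 * (512 * Q ^ 2 * a) * (3 * l)) ^ 2 := by gcongr
      _ = _ := by ring
  exact le_of_mul_le_mul_right key (by positivity)

/-- `|AA - AA|^2 ≫ |A|^2 |A / A|`. -/
lemma bilinear (A : Finset ℝ) (h0 : (0 : ℝ) ∉ A) (hA : A.Nonempty) :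
    A.card ^ 2 * (A / A).card ≤ 512 * (A * A - A * A).card ^ 2 := by
  have hch : ∀ q : ℝ, ∃ p : ℝ × ℝ, q ∈ A / A → p.1 ∈ A ∧ p.2 ∈ A ∧ p.1 / p.2 = q := by
    intro q
    by_cases h : q ∈ A / A
    · obtain ⟨u, hu, v, hv, e⟩ := mem_div.1 h
      exact ⟨(u, v), fun _ => ⟨hu, hv, e⟩⟩
    · exact ⟨0, fun h' => absurd h' h⟩
  choose p hp using hch
  have hne : ∀ x ∈ A, x ≠ 0 := fun x hx h => h0 (h ▸ hx)
  set Q := A / A with hQ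
  set D := A * A - A * A with hD
  set n := A.card with hn
  have hn1 : 1 ≤ n := hA.card_pos
  have hkn : Q.card ≤ n * n := card_div_le
  have hMn : n ≤ D.card := by
    obtain ⟨a, ha⟩ := hA
    apply card_le_card_of_injOn (fun x => x * a - a * a)
    · intro x hx
      exact sub_mem_sub (mul_mem_mul hx ha) (mul_mem_mul ha ha)
    · intro x _ y _ h
      simp only at h
      exact mul_right_cancel₀ (hne a ha) (by linarith)
  set L := (Q ×ˢ D).image (fun z => (z.1, z.2 / (p z.1).2)) with hL
  have hinj : Set.InjOn (fun z : ℝ × ℝ => (z.1, z.2 / (p z.1).2)) (Q ×ˢ D : Finset (ℝ × ℝ)) := by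
    rintro ⟨q, t⟩ hz ⟨q', t'⟩ hz' h
    simp only [coe_product, Set.mem_prod, mem_coe] at hz hz'
    simp only [Prod.mk.injEq] at h ⊢
    obtain ⟨rfl, h2⟩ := h
    exact ⟨rfl, (div_left_inj' (hne _ (hp q hz.1).2.1)).1 h2⟩
  have hLc : L.card = Q.card * D.card := by
    rw [hL, card_image_of_injOn hinj, card_product]
  have hL0 : ∀ l ∈ L, l.1 ≠ 0 := by
    intro l hl
    obtain ⟨⟨q, t⟩, hz, rfl⟩ := mem_image.1 hl
    obtain ⟨h1, h2, h3⟩ := hp q (mem_product.1 hz).1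
    simp only
    rw [← h3]
    exact div_ne_zero (hne _ h1) (hne _ h2)
  have hI : Q.card * n ^ 2 ≤ ∑ l ∈ L, (inc A A l).card := by
    rw [hL, sum_image hinj, sum_product, ← smul_eq_mul, ← sum_const]
    apply sum_le_sum
    intro q hq
    obtain ⟨h1, h2, h3⟩ := hp q hq
    have hv := hne _ h2
    rw [sq, hn, ← card_product, ← card_sigma]
    apply card_le_card_of_injOn
      (fun z : ℝ × ℝ => (⟨(p q).2 * z.2 - (p q).1 * z.1, z.1⟩ : (_ : ℝ) × ℝ))
    · rintro ⟨x, y⟩ hz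
      simp only [coe_product, Set.mem_prod, mem_coe] at hz
      simp only [coe_sigma, Set.mem_sigma_iff, mem_coe, inc, mem_filter]
      refine ⟨sub_mem_sub (mul_mem_mul h2 hz.2) (mul_mem_mul h1 hz.1), hz.1, ?_⟩
      have : q * x + ((p q).2 * y - (p q).1 * x) / (p q).2 = y := by
        generalize p q = w at *
        rw [← h3]
        field_simp
        ring
      rw [this]; exact hz.2
    · rintro ⟨x, y⟩ _ ⟨x', y'⟩ _ h
      simp only [Sigma.mk.injEq, heq_eq_eq] at h
      obtain ⟨h4, rfl⟩ := h
      have : y = y' := mul_left_cancel₀ hv (by linarith)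
      rw [this]
  by_cases hc : 4 * D.card ≤ n ^ 2
  · set r := n ^ 2 / (4 * D.card) with hr
    have hDpos : 0 < 4 * D.card := by omega
    have hr1 : 1 ≤ r := (Nat.one_le_div_iff hDpos).2 hc
    have hr2 : r * (4 * D.card) ≤ n ^ 2 := Nat.div_mul_le_self _ _
    have hr3 : n ^ 2 < (r + 1) * (4 * D.card) := by
      have := Nat.lt_div_mul_add (a := n ^ 2) hDpos
      rw [add_mul, one_mul]; exact this
    have hrn : r ≤ n := by
      by_contra! hlt
      nlinarith
    have G := grid_incidence A A L hL0 r hr1 hrn hrn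
    rw [hLc] at G
    have G2 : r ^ 2 * (Q.card * n ^ 2) ≤ 2 * r ^ 3 * (Q.card * D.card) + 4 * n ^ 2 * n ^ 2 :=
      (Nat.mul_le_mul_left _ hI).trans G
    generalize Q.card = k at *
    generalize D.card = M at *
    have G3 : (r ^ 2 * k) * (r * (4 * M)) ≤ (r ^ 2 * k) * n ^ 2 := Nat.mul_le_mul_left _ hr2
    have G4 : (r ^ 2 * k) * n ^ 2 ≤ (8 * n ^ 2) * n ^ 2 := by nlinarith
    have G5 : r ^ 2 * k ≤ 8 * n ^ 2 := Nat.le_of_mul_le_mul_right G4 (by positivity)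
    have G6 : n ^ 2 ≤ 8 * M * r := by nlinarith
    have G7 : n ^ 2 * (n ^ 2 * k) ≤ n ^ 2 * (512 * M ^ 2) := by
      calc n ^ 2 * (n ^ 2 * k) = n ^ 2 * n ^ 2 * k := by ring
        _ ≤ (8 * M * r) * (8 * M * r) * k := by gcongr
        _ = 64 * M ^ 2 * (r ^ 2 * k) := by ring
        _ ≤ 64 * M ^ 2 * (8 * n ^ 2) := by gcongr
        _ = _ := by ring
    exact Nat.le_of_mul_le_mul_left G7 (by positivity)
  · push Not at hc
    generalize Q.card = k at *
    generalize D.card = M at *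
    calc n ^ 2 * k ≤ n ^ 2 * (n * n) := by gcongr
      _ = n ^ 2 * n ^ 2 := by ring
      _ ≤ (4 * M) * (4 * M) := by gcongr
      _ ≤ _ := by nlinarith

theorem stmt_3 :
    ∃ c : ℝ, 0 < c ∧
      ∀ A : Finset ℝ, (0 : ℝ) ∉ A → 2 ≤ A.card →
        c * (A.card : ℝ) ^ ((26 : ℝ) / 17) / (Real.log (A.card : ℝ)) ^ ((2 : ℝ) / 17)
          ≤ ((A * A - A * A).card : ℝ) := by
  obtain ⟨C, hC, hdq⟩ := diff_quot
  refine ⟨(512 ^ 6 * C) ^ (-(1 : ℝ) / 17), by positivity, ?_⟩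
  intro A h0 h2
  have hA : A.Nonempty := card_pos.1 (by omega)
  have h1 := hdq A h0 h2
  have h3 : (A.card : ℝ) ^ 2 * ((A / A).card : ℝ) ≤ 512 * ((A * A - A * A).card : ℝ) ^ 2 := by
    exact_mod_cast bilinear A h0 hA
  have h4 : ((A - A).card : ℝ) ≤ ((A * A - A * A).card : ℝ) := by
    obtain ⟨a, ha⟩ := hA
    have hane : a ≠ 0 := fun h => h0 (h ▸ ha)
    have : (A - A).card ≤ (A * A - A * A).card := by
      apply card_le_card_of_injOn (fun x => a * x)
      · intro x hx
        obtain ⟨b, hb, c, hc, rfl⟩ := mem_sub.1 (mem_coe.1 hx)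
        simp only [mul_sub]
        exact sub_mem_sub (mul_mem_mul ha hb) (mul_mem_mul ha hc)
      · intro x _ y _ h
        exact mul_left_cancel₀ hane h
    exact_mod_cast this
  have hq1 : (0 : ℝ) < (A / A).card := by exact_mod_cast (hA.div hA).card_pos
  have hd0 : (0 : ℝ) ≤ (A - A).card := Nat.cast_nonneg _
  have hM0 : (0 : ℝ) ≤ (A * A - A * A).card := Nat.cast_nonneg _
  have ha1 : (2 : ℝ) ≤ A.card := by exact_mod_cast h2
  have hlog : 0 < Real.log A.card := Real.log_pos (by linarith)
  generalize ((A * A - A * A).card : ℝ) = M at *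
  generalize ((A - A).card : ℝ) = d at *
  generalize ((A / A).card : ℝ) = Q at *
  generalize Real.log (A.card : ℝ) = l at *
  generalize (A.card : ℝ) = a at *
  have ha0 : 0 < a := by linarith
  have key : a ^ 26 ≤ (512 ^ 6 * C) * M ^ 17 * l ^ 2 := by
    have : a ^ 26 * Q ^ 6 ≤ ((512 ^ 6 * C) * M ^ 17 * l ^ 2) * Q ^ 6 := by
      calc a ^ 26 * Q ^ 6 = (a ^ 2 * Q) ^ 6 * a ^ 14 := by ring
        _ ≤ (512 * M ^ 2) ^ 6 * (C * d ^ 5 * Q ^ 6 * l ^ 2) := by gcongr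
        _ ≤ (512 * M ^ 2) ^ 6 * (C * M ^ 5 * Q ^ 6 * l ^ 2) := by gcongr
        _ = _ := by ring
    exact le_of_mul_le_mul_right this (by positivity)
  rw [div_le_iff₀ (by positivity)]
  refine le_of_pow_le_pow_left₀ (n := 17) (by norm_num) (by positivity) ?_
  have hB : 0 < 512 ^ 6 * C := by positivity
  generalize 512 ^ 6 * C = B at *
  have e1 : (B ^ (-(1 : ℝ) / 17)) ^ 17 = B⁻¹ := by
    rw [← Real.rpow_natCast, ← Real.rpow_mul hB.le, ← Real.rpow_neg_one]; norm_num
  have e2 : (a ^ ((26 : ℝ) / 17)) ^ 17 = a ^ 26 := by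
    rw [← Real.rpow_natCast, ← Real.rpow_mul ha0.le, ← Real.rpow_natCast]; norm_num
  have e3 : (l ^ ((2 : ℝ) / 17)) ^ 17 = l ^ 2 := by
    rw [← Real.rpow_natCast, ← Real.rpow_mul hlog.le, ← Real.rpow_natCast]; norm_num
  rw [mul_pow, mul_pow, e1, e2, e3, inv_mul_le_iff₀ hB]
  linarith
end

section
/- (Szemerédi–Trotter theorem over ℝ.) There exists an absolute constant C > 0 such that for every finite set P of points in ℝ² and every finite set L of affine lines in ℝ², the number of incidences I(P,L) = #{(p,l) ∈ P × L : p ∈ l} satisfies I(P,L) ≤ C·(|P|^(2/3)·|L|^(2/3) + |P| + |L|). -/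
open Finset
open scoped Classical

/-- `l ⊆ ℝ²` is an affine line: the solution set of a nontrivial linear equation. -/
def IsAffineLine (l : Set (ℝ × ℝ)) : Prop :=
  ∃ a b c : ℝ, (a, b) ≠ (0, 0) ∧ l = {p : ℝ × ℝ | a * p.1 + b * p.2 = c}

lemma st_ivt_left (a b c d x1 x2 : ℝ) (h : x1 < x2) (h1 : c * x1 + d ≤ a * x1 + b)
    (h2 : a * x2 + b < c * x2 + d) : ∃ x, x1 ≤ x ∧ x < x2 ∧ a * x + b = c * x + d := by
  have hca : 0 < c - a := by
    by_contra hn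
    push Not at hn
    nlinarith
  refine ⟨(b - d) / (c - a), ?_, ?_, ?_⟩
  · rw [le_div_iff₀ hca]; linarith
  · rw [div_lt_iff₀ hca]; linarith
  · field_simp
    ring

lemma st_ivt (a b c d x1 x2 : ℝ) (h : x1 < x2) (h1 : c * x1 + d < a * x1 + b)
    (h2 : a * x2 + b < c * x2 + d) : ∃ x, x1 < x ∧ x < x2 ∧ a * x + b = c * x + d := by
  obtain ⟨x, hx1, hx2, hx⟩ := st_ivt_left a b c d x1 x2 h h1.le h2
  refine ⟨x, lt_of_le_of_ne hx1 ?_, hx2, hx⟩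
  rintro rfl
  linarith

/-- A geometric graph: vertices with distinct abscissae, edges are segments on lines
`y = m x + k`, and no vertex lies in the interior of an edge. -/
structure STGraph {ε : Type*} (V : Finset (ℝ × ℝ)) (E : Finset ε) (s t : ε → ℝ × ℝ)
    (m k : ε → ℝ) : Prop where
  inj : ∀ v ∈ V, ∀ w ∈ V, v.1 = w.1 → v = w
  sV : ∀ e ∈ E, s e ∈ V
  tV : ∀ e ∈ E, t e ∈ V
  lt : ∀ e ∈ E, (s e).1 < (t e).1
  sl : ∀ e ∈ E, (s e).2 = m e * (s e).1 + k e
  tl : ∀ e ∈ E, (t e).2 = m e * (t e).1 + k e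
  noint : ∀ e ∈ E, ∀ v ∈ V, (s e).1 < v.1 → v.1 < (t e).1 → v.2 ≠ m e * v.1 + k e

/-- Two different edges meet at an interior point. -/
def STCross {ε : Type*} (s t : ε → ℝ × ℝ) (m k : ε → ℝ) (e f : ε) : Prop :=
  e ≠ f ∧ ∃ x, (s e).1 < x ∧ x < (t e).1 ∧ (s f).1 < x ∧ x < (t f).1 ∧
    m e * x + k e = m f * x + k f

section planar
variable {ε : Type*} {V : Finset (ℝ × ℝ)} {E : Finset ε} {s t : ε → ℝ × ℝ} {m k : ε → ℝ}

lemma st_key (G : STGraph V E s t m k)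
    (nc : ∀ e ∈ E, ∀ f ∈ E, ¬ STCross s t m k e f)
    (e e' f : ε) (he : e ∈ E) (he' : e' ∈ E) (hf : f ∈ E)
    (hs : s e' = s e) (hm : m e < m e')
    (hnext : ∀ g ∈ E, s g = s e → m e < m g → m e' ≤ m g)
    (X : ℝ) (hX2 : X ≤ (t e).1) (hX3 : X ≤ (t e').1)
    (hempty : ∀ w ∈ V, (s e).1 < w.1 → w.1 < X →
      ¬ (m e * w.1 + k e ≤ w.2 ∧ w.2 ≤ m e' * w.1 + k e'))
    (x1 : ℝ) (h1 : (s e).1 < x1) (h2 : x1 < X) (h3 : (s f).1 < x1) (h4 : X ≤ (t f).1)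
    (hef : m e * x1 + k e < m f * x1 + k f)
    (hfe' : m f * X + k f < m e' * X + k e') : False := by
  have hs1 : (s e').1 = (s e).1 := by rw [hs]
  have hp := G.sl e he
  have hp' := G.sl e' he'
  rw [hs] at hp'
  have hr := G.sl f hf
  have ne1 : e ≠ f := by rintro rfl; linarith
  have ne2 : f ≠ e' := by rintro rfl; linarith
  have hx1' : m f * x1 + k f < m e' * x1 + k e' := by
    by_contra hn
    push Not at hn
    obtain ⟨x, hx1, hx2, hx⟩ := st_ivt_left _ _ _ _ _ _ h2 hn hfe'
    exact nc f hf e' he' ⟨ne2, x, by linarith, by linarith, by linarith, by linarith, hx⟩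
  rcases lt_trichotomy (s f).1 (s e).1 with h | h | h
  · have hni := G.noint f hf (s e) (G.sV e he) h (by linarith)
    rcases lt_or_gt_of_ne hni with h' | h'
    · obtain ⟨x, a1, a2, a3⟩ := st_ivt (m f) (k f) (m e') (k e') (s e).1 x1 h1
        (by linarith) hx1'
      exact nc f hf e' he' ⟨ne2, x, by linarith, by linarith, by linarith, by linarith, a3⟩
    · obtain ⟨x, a1, a2, a3⟩ := st_ivt (m e) (k e) (m f) (k f) (s e).1 x1 h1
        (by linarith) hef
      exact nc e he f hf ⟨ne1, x, by linarith, by linarith, by linarith, by linarith, a3⟩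
  · have hsf : s f = s e := G.inj _ (G.sV f hf) _ (G.sV e he) h
    rw [hsf] at hr
    have m1 : m e < m f := by
      by_contra hn
      push Not at hn
      nlinarith
    have := hnext f hf hsf m1
    nlinarith
  · have := hempty (s f) (G.sV f hf) h (by linarith)
    rw [not_and_or] at this
    push Not at this
    rcases this with h' | h'
    · obtain ⟨x, a1, a2, a3⟩ := st_ivt (m e) (k e) (m f) (k f) (s f).1 x1 h3
        (by linarith) hef
      exact nc e he f hf ⟨ne1, x, by linarith, by linarith, by linarith, by linarith, a3⟩
    · obtain ⟨x, a1, a2, a3⟩ := st_ivt (m f) (k f) (m e') (k e') (s f).1 x1 h3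
        (by linarith) hx1'
      exact nc f hf e' he' ⟨ne2, x, by linarith, by linarith, by linarith, by linarith, a3⟩

/-- The edge `e` is charged to the vertex `v`. -/
def STCharge (V : Finset (ℝ × ℝ)) (E : Finset ε) (s t : ε → ℝ × ℝ) (m k : ε → ℝ)
    (e : ε) (v : ℝ × ℝ) : Prop :=
  ∃ e' ∈ E, s e' = s e ∧ m e < m e' ∧
    (∀ g ∈ E, s g = s e → m e < m g → m e' ≤ m g) ∧
    (s e).1 < v.1 ∧ v.1 ≤ (t e).1 ∧ v.1 ≤ (t e').1 ∧
    m e * v.1 + k e ≤ v.2 ∧ v.2 ≤ m e' * v.1 + k e' ∧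
    (∀ w ∈ V, (s e).1 < w.1 → w.1 < v.1 →
      ¬ (m e * w.1 + k e ≤ w.2 ∧ w.2 ≤ m e' * w.1 + k e'))

lemma st_charge_exists (G : STGraph V E s t m k) (e : ε) (he : e ∈ E)
    (h : ∃ g ∈ E, s g = s e ∧ m e < m g) : ∃ v ∈ V, STCharge V E s t m k e v := by
  obtain ⟨g, hg, hg1, hg2⟩ := h
  obtain ⟨e', he', hmin⟩ := Finset.exists_min_image
    (E.filter fun g => s g = s e ∧ m e < m g) m ⟨g, by simp [hg, hg1, hg2]⟩
  simp only [Finset.mem_filter] at he' hmin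
  obtain ⟨he', hs', hm'⟩ := he'
  have hs1 : (s e').1 = (s e).1 := by rw [hs']
  have hp := G.sl e he
  have hp' := G.sl e' he'
  rw [hs'] at hp'
  have ht := G.tl e he
  have ht' := G.tl e' he'
  have hl := G.lt e he
  have hl' := G.lt e' he'
  have hne : (V.filter fun v => (s e).1 < v.1 ∧ v.1 ≤ (t e).1 ∧ v.1 ≤ (t e').1 ∧
    m e * v.1 + k e ≤ v.2 ∧ v.2 ≤ m e' * v.1 + k e').Nonempty := by
    rcases le_total (t e).1 (t e').1 with h | h
    · refine ⟨t e, ?_⟩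
      simp only [Finset.mem_filter]
      refine ⟨G.tV e he, hl, le_rfl, h, ht.ge, ?_⟩
      nlinarith
    · refine ⟨t e', ?_⟩
      simp only [Finset.mem_filter]
      refine ⟨G.tV e' he', by linarith, h, le_rfl, ?_, ht'.le⟩
      nlinarith
  obtain ⟨v, hv, hvmin⟩ := Finset.exists_min_image _ (fun v : ℝ × ℝ => v.1) hne
  simp only [Finset.mem_filter] at hv hvmin
  obtain ⟨hv, a1, a2, a3, a4, a5⟩ := hv
  refine ⟨v, hv, e', he', hs', hm', fun g hg h1 h2 => hmin g ⟨hg, h1, h2⟩,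
    a1, a2, a3, a4, a5, ?_⟩
  rintro w hw b1 b2 ⟨b3, b4⟩
  have := hvmin w ⟨hw, b1, by linarith, by linarith, b3, b4⟩
  linarith

lemma st_charge_inj (G : STGraph V E s t m k)
    (nc : ∀ e ∈ E, ∀ f ∈ E, ¬ STCross s t m k e f)
    (e f : ε) (he : e ∈ E) (hf : f ∈ E) (v : ℝ × ℝ)
    (ce : STCharge V E s t m k e v) (cf : STCharge V E s t m k f v)
    (hty : (v = t e ∧ v = t f) ∨
      (m e * v.1 + k e < v.2 ∧ m f * v.1 + k f < v.2)) : e = f := by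
  by_contra hne
  obtain ⟨e', he', e1, e2, e3, e4, e5, e6, e7, e8, e9⟩ := ce
  obtain ⟨f', hf', f1, f2, f3, f4, f5, f6, f7, f8, f9⟩ := cf
  obtain ⟨x1, hx1, hx2, hx3⟩ : ∃ x1, (s e).1 < x1 ∧ (s f).1 < x1 ∧ x1 < v.1 := by
    obtain ⟨x, h1, h2⟩ := exists_between (max_lt e4 f4)
    exact ⟨x, (le_max_left _ _).trans_lt h1, (le_max_right _ _).trans_lt h1, h2⟩
  have pe := G.sl e he
  have pe' := G.sl e' he'
  rw [e1] at pe'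
  have pf := G.sl f hf
  have pf' := G.sl f' hf'
  rw [f1] at pf'
  have A : m e * v.1 + k e < m e' * v.1 + k e' := by nlinarith
  have B : m f * v.1 + k f < m f' * v.1 + k f' := by nlinarith
  have A' : m f * v.1 + k f < m e' * v.1 + k e' := by
    rcases hty with ⟨h1, h2⟩ | ⟨h1, h2⟩
    · have q1 := G.tl e he
      have q2 := G.tl f hf
      rw [← h1] at q1
      rw [← h2] at q2
      linarith
    · linarith
  have B' : m e * v.1 + k e < m f' * v.1 + k f' := by
    rcases hty with ⟨h1, h2⟩ | ⟨h1, h2⟩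
    · have q1 := G.tl e he
      have q2 := G.tl f hf
      rw [← h1] at q1
      rw [← h2] at q2
      linarith
    · linarith
  rcases lt_trichotomy (m e * x1 + k e) (m f * x1 + k f) with h | h | h
  · exact st_key G nc e e' f he he' hf e1 e2 e3 v.1 e5 e6 e9 x1 hx1 hx3 hx2 f5 h A'
  · exact nc e he f hf ⟨hne, x1, hx1, by linarith, hx2, by linarith, h⟩
  · exact st_key G nc f f' e hf hf' he f1 f2 f3 v.1 f5 f6 f9 x1 hx2 hx3 hx1 e5 h B'

lemma st_planar (G : STGraph V E s t m k)
    (nc : ∀ e ∈ E, ∀ f ∈ E, ¬ STCross s t m k e f) : E.card ≤ 3 * V.card := by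
  set A := E.filter fun e => ¬ ∃ g ∈ E, s g = s e ∧ m e < m g with hA
  set B := E.filter fun e => STCharge V E s t m k e (t e) with hB
  set C := E.filter fun e => ∃ v ∈ V, STCharge V E s t m k e v ∧ m e * v.1 + k e < v.2 with hC
  have cov : E ⊆ A ∪ (B ∪ C) := by
    intro e he
    simp only [hA, hB, hC, Finset.mem_union, Finset.mem_filter, he, true_and]
    by_cases h : ∃ g ∈ E, s g = s e ∧ m e < m g
    · right
      obtain ⟨v, hv, hc⟩ := st_charge_exists G e he h
      by_cases hlt : m e * v.1 + k e < v.2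
      · exact Or.inr ⟨v, hv, hc, hlt⟩
      · left
        have hc' := hc
        obtain ⟨e', he', e1, e2, e3, e4, e5, e6, e7, e8, e9⟩ := hc'
        have heq : v.2 = m e * v.1 + k e := by linarith
        have : v = t e := by
          apply G.inj _ hv _ (G.tV e he)
          by_contra hn
          exact G.noint e he v hv e4 (lt_of_le_of_ne e5 hn) heq
        rwa [← this]
    · exact Or.inl h
  have cA : A.card ≤ V.card := by
    apply Finset.card_le_card_of_injOn s
    · intro e he
      simp only [hA, Finset.coe_filter, Set.mem_ofPred_eq] at he
      exact G.sV e he.1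
    · intro e he f hf hef
      simp only [hA, Finset.coe_filter, Set.mem_ofPred_eq] at he hf
      by_contra hne
      have hm : m e = m f := by
        rcases lt_trichotomy (m e) (m f) with h | h | h
        · exact absurd ⟨f, hf.1, hef.symm, h⟩ he.2
        · exact h
        · exact absurd ⟨e, he.1, hef, h⟩ hf.2
      have p1 := G.sl e he.1
      have p2 := G.sl f hf.1
      have l1 := G.lt e he.1
      have l2 := G.lt f hf.1
      obtain ⟨x, h1, h2⟩ := exists_between (lt_min l1 (hef ▸ l2))
      rw [← hef] at p2 l2
      refine nc e he.1 f hf.1 ⟨hne, x, h1, h2.trans_le (min_le_left _ _), ?_,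
        h2.trans_le (min_le_right _ _), ?_⟩
      · rw [← hef]; exact h1
      · rw [hm] at p1 ⊢
        linarith
  have cB : B.card ≤ V.card := by
    apply Finset.card_le_card_of_injOn t
    · intro e he
      simp only [hB, Finset.coe_filter, Set.mem_ofPred_eq] at he
      exact G.tV e he.1
    · intro e he f hf hef
      simp only [hB, Finset.coe_filter, Set.mem_ofPred_eq] at he hf
      exact st_charge_inj G nc e f he.1 hf.1 (t e) he.2 (hef ▸ hf.2) (Or.inl ⟨rfl, hef⟩)
  have cC : C.card ≤ V.card := by
    have : ∀ e : ε, ∃ v, e ∈ C → v ∈ V ∧ STCharge V E s t m k e v ∧ m e * v.1 + k e < v.2 := by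
      intro e
      by_cases h : e ∈ C
      · have h' := h
        simp only [hC, Finset.mem_filter] at h'
        obtain ⟨v, hv, h2⟩ := h'.2
        exact ⟨v, fun _ => ⟨hv, h2⟩⟩
      · exact ⟨0, fun h' => absurd h' h⟩
    choose c hc using this
    apply Finset.card_le_card_of_injOn c
    · intro e he
      exact (hc e he).1
    · intro e he f hf hef
      have a1 := (hc e he).2
      have a2 := (hc f hf).2
      rw [← hef] at a2
      have he' : e ∈ E := (Finset.mem_filter.1 he).1
      have hf' : f ∈ E := (Finset.mem_filter.1 hf).1
      exact st_charge_inj G nc e f he' hf' (c e) a1.1 a2.1 (Or.inr ⟨a1.2, a2.2⟩)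
  have h1 := Finset.card_le_card cov
  have h2 := Finset.card_union_le A (B ∪ C)
  have h3 := Finset.card_union_le B C
  omega

lemma st_cross_card (n : ℕ) : ∀ (E : Finset ε), E.card = n → STGraph V E s t m k →
    E.card ≤ 3 * V.card + ((E ×ˢ E).filter fun q => STCross s t m k q.1 q.2).card := by
  induction n with
  | zero => intro E h _; omega
  | succ n ih =>
    intro E hn G
    by_cases h : ∀ e ∈ E, ∀ f ∈ E, ¬ STCross s t m k e f
    · have := st_planar G h
      omega
    · push Not at h
      obtain ⟨e, he, f, hf, hc⟩ := h
      have hcard := Finset.card_erase_of_mem he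
      have hmem : ∀ x ∈ E.erase e, x ∈ E := fun x hx => Finset.mem_of_mem_erase hx
      have := ih (E.erase e) (by omega)
        ⟨G.inj, fun x hx => G.sV x (hmem x hx), fun x hx => G.tV x (hmem x hx),
          fun x hx => G.lt x (hmem x hx), fun x hx => G.sl x (hmem x hx),
          fun x hx => G.tl x (hmem x hx), fun x hx => G.noint x (hmem x hx)⟩
      have hlt : (((E.erase e) ×ˢ (E.erase e)).filter fun q => STCross s t m k q.1 q.2).card <
          ((E ×ˢ E).filter fun q => STCross s t m k q.1 q.2).card := by
        apply Finset.card_lt_card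
        refine Finset.ssubset_iff_of_subset ?_ |>.2 ⟨(e, f), ?_, ?_⟩
        · intro q hq
          simp only [Finset.mem_filter, Finset.mem_product] at hq ⊢
          exact ⟨⟨hmem _ hq.1.1, hmem _ hq.1.2⟩, hq.2⟩
        · simp [he, hf, hc]
        · simp
      omega

end planar

/-- Bernoulli weight of a subset. -/
noncomputable def stW {α : Type*} (V : Finset α) (p : ℝ) (S : Finset α) : ℝ :=
  p ^ S.card * (1 - p) ^ (V \ S).card

lemma st_sum_sup {α : Type*} (V T : Finset α) (hT : T ⊆ V) (p : ℝ) :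
    ∑ S ∈ V.powerset, (if T ⊆ S then stW V p S else 0) = p ^ T.card := by
  have h := Finset.prod_add (fun _ : α => p) (fun v => if v ∈ T then 0 else 1 - p) V
  have hL : ∏ v ∈ V, (p + if v ∈ T then 0 else 1 - p) = p ^ T.card := by
    have : ∀ v ∈ V, (p + if v ∈ T then 0 else 1 - p) = if v ∈ T then p else 1 := by
      intro v _
      split_ifs <;> ring
    rw [Finset.prod_congr rfl this, Finset.prod_ite, Finset.prod_const, Finset.prod_const,
      one_pow, mul_one, Finset.filter_mem_eq_inter, Finset.inter_eq_right.2 hT]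
  rw [← hL, h]
  apply Finset.sum_congr rfl
  intro S hS
  rw [Finset.mem_powerset] at hS
  rw [Finset.prod_const]
  split_ifs with hTS
  · unfold stW
    congr 1
    rw [← Finset.prod_const]
    apply Finset.prod_congr rfl
    intro v hv
    rw [if_neg]
    intro hvT
    exact (Finset.mem_sdiff.1 hv).2 (hTS hvT)
  · obtain ⟨v, hv, hvS⟩ := Finset.not_subset.1 hTS
    rw [Finset.prod_eq_zero (i := v) (Finset.mem_sdiff.2 ⟨hT hv, hvS⟩) (by simp [hv]), mul_zero]

lemma st_sum_count {α ι : Type*} (V : Finset α) (p : ℝ) (A : Finset ι) (T : ι → Finset α)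
    (hT : ∀ i ∈ A, T i ⊆ V) :
    ∑ S ∈ V.powerset, stW V p S * ((A.filter fun i => T i ⊆ S).card : ℝ)
      = ∑ i ∈ A, p ^ (T i).card := by
  have : ∀ i ∈ A, p ^ (T i).card =
      ∑ S ∈ V.powerset, (if T i ⊆ S then stW V p S else 0) :=
    fun i hi => (st_sum_sup V (T i) (hT i hi) p).symm
  rw [Finset.sum_congr rfl this, Finset.sum_comm]
  apply Finset.sum_congr rfl
  intro S _
  rw [← Finset.sum_filter, Finset.sum_const, nsmul_eq_mul, mul_comm]

lemma st_sample {ε : Type*} {V : Finset (ℝ × ℝ)} {E : Finset ε} {s t : ε → ℝ × ℝ}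
    {m k : ε → ℝ} (G : STGraph V E s t m k)
    (h4 : ∀ e ∈ E, ∀ f ∈ E, STCross s t m k e f →
      ({s e, t e, s f, t f} : Finset (ℝ × ℝ)).card = 4)
    (p : ℝ) (hp0 : 0 ≤ p) (hp1 : p ≤ 1) :
    p ^ 2 * E.card ≤ 3 * p * V.card +
      p ^ 4 * ((E ×ˢ E).filter fun q => STCross s t m k q.1 q.2).card := by
  set X := (E ×ˢ E).filter fun q => STCross s t m k q.1 q.2 with hX
  have hXm : ∀ q ∈ X, q.1 ∈ E ∧ q.2 ∈ E ∧ STCross s t m k q.1 q.2 := by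
    intro q hq
    simp only [hX, Finset.mem_filter, Finset.mem_product] at hq
    exact ⟨hq.1.1, hq.1.2, hq.2⟩
  have c1 := st_sum_count V p E (fun e => {s e, t e}) (by
    intro e he v hv
    simp only [Finset.mem_insert, Finset.mem_singleton] at hv
    rcases hv with rfl | rfl
    · exact G.sV e he
    · exact G.tV e he)
  have c2 := st_sum_count V p V (fun v => {v}) (by simp)
  have c3 := st_sum_count V p X (fun q => {s q.1, t q.1, s q.2, t q.2}) (by
    intro q hq v hv
    obtain ⟨h1, h2, -⟩ := hXm q hq
    simp only [Finset.mem_insert, Finset.mem_singleton] at hv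
    rcases hv with rfl | rfl | rfl | rfl
    · exact G.sV _ h1
    · exact G.tV _ h1
    · exact G.sV _ h2
    · exact G.tV _ h2)
  have d1 : ∑ e ∈ E, p ^ ({s e, t e} : Finset (ℝ × ℝ)).card = p ^ 2 * E.card := by
    rw [Finset.sum_congr rfl (g := fun _ => p ^ 2), Finset.sum_const, nsmul_eq_mul, mul_comm]
    intro e he
    rw [Finset.card_pair]
    intro h
    have := G.lt e he
    rw [h] at this
    exact lt_irrefl _ this
  have d2 : ∑ v ∈ V, p ^ ({v} : Finset (ℝ × ℝ)).card = p * V.card := by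
    simp [mul_comm]
  have d3 : ∑ q ∈ X, p ^ ({s q.1, t q.1, s q.2, t q.2} : Finset (ℝ × ℝ)).card
      = p ^ 4 * X.card := by
    rw [Finset.sum_congr rfl (g := fun _ => p ^ 4), Finset.sum_const, nsmul_eq_mul, mul_comm]
    intro q hq
    obtain ⟨h1, h2, h3⟩ := hXm q hq
    rw [h4 _ h1 _ h2 h3]
  rw [d1] at c1
  rw [d2] at c2
  rw [d3] at c3
  rw [← c1, mul_assoc, ← c2, ← c3, Finset.mul_sum, ← Finset.sum_add_distrib]
  apply Finset.sum_le_sum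
  intro S hS
  rw [Finset.mem_powerset] at hS
  have hw : 0 ≤ stW V p S := by
    unfold stW
    have : 0 ≤ 1 - p := by linarith
    positivity
  have hVS : (V.filter fun v => ({v} : Finset (ℝ × ℝ)) ⊆ S) = S := by
    ext v
    simp only [Finset.mem_filter, Finset.singleton_subset_iff]
    exact ⟨fun h => h.2, fun h => ⟨hS h, h⟩⟩
  set ES := E.filter fun e => ({s e, t e} : Finset (ℝ × ℝ)) ⊆ S with hES
  have hESm : ∀ e, e ∈ ES ↔ e ∈ E ∧ s e ∈ S ∧ t e ∈ S := by
    intro e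
    simp [hES, Finset.insert_subset_iff]
  have key := st_cross_card (V := S) (s := s) (t := t) (m := m) (k := k) ES.card ES rfl
    ⟨fun v hv w hw => G.inj v (hS hv) w (hS hw),
      fun e he => ((hESm e).1 he).2.1, fun e he => ((hESm e).1 he).2.2,
      fun e he => G.lt e ((hESm e).1 he).1, fun e he => G.sl e ((hESm e).1 he).1,
      fun e he => G.tl e ((hESm e).1 he).1,
      fun e he v hv => G.noint e ((hESm e).1 he).1 v (hS hv)⟩
  have hXS : ((ES ×ˢ ES).filter fun q => STCross s t m k q.1 q.2)
      = X.filter fun q => ({s q.1, t q.1, s q.2, t q.2} : Finset (ℝ × ℝ)) ⊆ S := by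
    ext q
    simp only [hX, Finset.mem_filter, Finset.mem_product, hESm, Finset.insert_subset_iff,
      Finset.singleton_subset_iff]
    tauto
  rw [hXS] at key
  have key' : (ES.card : ℝ) ≤ 3 * S.card +
      ((X.filter fun q => ({s q.1, t q.1, s q.2, t q.2} : Finset (ℝ × ℝ)) ⊆ S).card : ℝ) := by
    exact_mod_cast key
  have fin : stW V p S * ES.card ≤
      3 * (stW V p S * (V.filter fun v => ({v} : Finset (ℝ × ℝ)) ⊆ S).card) + stW V p S *
      (X.filter fun q => ({s q.1, t q.1, s q.2, t q.2} : Finset (ℝ × ℝ)) ⊆ S).card := by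
    rw [hVS]
    nlinarith [mul_le_mul_of_nonneg_left key' hw]
  convert fin
  rfl

/-- Numerical optimisation of the sampling probability. -/
lemma st_optimize (n M N X : ℝ) (hn : 0 ≤ n) (hM : 0 ≤ M) (hX : X ≤ M ^ 2)
    (h : ∀ p : ℝ, 0 ≤ p → p ≤ 1 → p ^ 2 * N ≤ 3 * p * n + p ^ 4 * X) :
    N ≤ 5 * (n ^ ((2 : ℝ) / 3) * M ^ ((2 : ℝ) / 3)) + 6 * n := by
  have hpos : 0 ≤ n ^ ((2 : ℝ) / 3) * M ^ ((2 : ℝ) / 3) := by positivity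
  by_cases hc : N ≤ 6 * n
  · linarith
  push Not at hc
  have hN0 : 0 < N := by linarith
  rcases hn.eq_or_lt with rfl | hn0
  · -- no vertices: small probabilities force there to be no edges
    exfalso
    have hM2 : 0 < M ^ 2 + N := by positivity
    have hp := h (N / (2 * (M ^ 2 + N))) (by positivity)
      (by rw [div_le_one (by positivity)]; nlinarith [sq_nonneg M])
    set p := N / (2 * (M ^ 2 + N)) with hpd
    have hp0 : 0 < p := by positivity
    have hp1 : p ≤ 1 := by rw [hpd, div_le_one (by positivity)]; nlinarith [sq_nonneg M]
    have e1 : p * (2 * (M ^ 2 + N)) = N := by rw [hpd]; field_simp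
    have e2 : p ^ 4 * X ≤ p ^ 4 * M ^ 2 := mul_le_mul_of_nonneg_left hX (by positivity)
    have e3 : p ^ 2 * N ≤ p ^ 2 * (p ^ 2 * M ^ 2) := by nlinarith
    have e4 : N ≤ p ^ 2 * M ^ 2 := le_of_mul_le_mul_left e3 (by positivity)
    have e5 : p ^ 2 * M ^ 2 ≤ p * M ^ 2 := by
      apply mul_le_mul_of_nonneg_right _ (sq_nonneg M)
      nlinarith
    nlinarith [mul_pos hp0 hN0]
  · have hp := h (6 * n / N) (by positivity) (by rw [div_le_one hN0]; linarith)
    have hcube : N ^ 3 ≤ 72 * n ^ 2 * M ^ 2 := by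
      have e2 : (6 * n / N) ^ 4 * X ≤ (6 * n / N) ^ 4 * M ^ 2 :=
        mul_le_mul_of_nonneg_left hX (by positivity)
      have e3 : (6 * n / N) ^ 2 * N ≤ 3 * (6 * n / N) * n + (6 * n / N) ^ 4 * M ^ 2 := by
        linarith
      have e4 : (6 * n / N) ^ 2 * N * N ^ 4 ≤
          (3 * (6 * n / N) * n + (6 * n / N) ^ 4 * M ^ 2) * N ^ 4 :=
        mul_le_mul_of_nonneg_right e3 (by positivity)
      have l1 : (6 * n / N) ^ 2 * N * N ^ 4 = 18 * n ^ 2 * (2 * N ^ 3) := by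
        field_simp; ring
      have l2 : (3 * (6 * n / N) * n + (6 * n / N) ^ 4 * M ^ 2) * N ^ 4
          = 18 * n ^ 2 * (N ^ 3 + 72 * n ^ 2 * M ^ 2) := by
        field_simp; ring
      rw [l1, l2] at e4
      have := le_of_mul_le_mul_left e4 (by positivity)
      linarith
    have hq : (n ^ ((2 : ℝ) / 3) * M ^ ((2 : ℝ) / 3)) ^ 3 = n ^ 2 * M ^ 2 := by
      rw [mul_pow, ← Real.rpow_natCast, ← Real.rpow_mul hn, ← Real.rpow_natCast,
        ← Real.rpow_mul hM]
      norm_num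
    have : N ≤ 5 * (n ^ ((2 : ℝ) / 3) * M ^ ((2 : ℝ) / 3)) := by
      refine le_of_pow_le_pow_left₀ (n := 3) (by norm_num) (by positivity) ?_
      rw [mul_pow, hq]
      nlinarith [mul_nonneg (sq_nonneg n) (sq_nonneg M)]
    linarith

/-- Szemerédi–Trotter for points with distinct abscissae and non-vertical lines. -/
lemma st_generic (V : Finset (ℝ × ℝ)) (hV : ∀ v ∈ V, ∀ w ∈ V, v.1 = w.1 → v = w)
    (L : Finset (ℝ × ℝ)) :
    (((V ×ˢ L).filter fun q => q.1.2 = q.2.1 * q.1.1 + q.2.2).card : ℝ) ≤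
      5 * ((V.card : ℝ) ^ ((2 : ℝ) / 3) * (L.card : ℝ) ^ ((2 : ℝ) / 3)) + 6 * V.card
        + L.card := by
  set I := (V ×ˢ L).filter fun q => q.1.2 = q.2.1 * q.1.1 + q.2.2 with hI
  have hIm : ∀ q, q ∈ I ↔ (q.1 ∈ V ∧ q.2 ∈ L) ∧ q.1.2 = q.2.1 * q.1.1 + q.2.2 := by
    intro q; simp [hI]
  set E := I.filter fun q => ∃ r ∈ V, q.1.1 < r.1 ∧ r.2 = q.2.1 * r.1 + q.2.2 with hE
  have hnext : ∀ q : (ℝ × ℝ) × (ℝ × ℝ), ∃ r : ℝ × ℝ, q ∈ E →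
      r ∈ V ∧ q.1.1 < r.1 ∧ r.2 = q.2.1 * r.1 + q.2.2 ∧
      ∀ w ∈ V, q.1.1 < w.1 → w.1 < r.1 → w.2 ≠ q.2.1 * w.1 + q.2.2 := by
    intro q
    by_cases hq : q ∈ E
    · have hq' := hq
      simp only [hE, Finset.mem_filter] at hq'
      obtain ⟨r, hr, h1, h2⟩ := hq'.2
      obtain ⟨r', hr', hmin⟩ := Finset.exists_min_image
        (V.filter fun r => q.1.1 < r.1 ∧ r.2 = q.2.1 * r.1 + q.2.2) (fun r => r.1)
        ⟨r, by simp only [Finset.mem_filter]; exact ⟨hr, h1, h2⟩⟩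
      simp only [Finset.mem_filter] at hr' hmin
      refine ⟨r', fun _ => ⟨hr'.1, hr'.2.1, hr'.2.2, ?_⟩⟩
      intro w hw a1 a2 a3
      have := hmin w ⟨hw, a1, a3⟩
      linarith
    · exact ⟨0, fun h => absurd h hq⟩
  choose t ht using hnext
  have hEI : ∀ q ∈ E, q ∈ I := fun q hq => (Finset.mem_filter.1 hq).1
  have G : STGraph V E (fun q => q.1) t (fun q => q.2.1) (fun q => q.2.2) :=
    ⟨hV, fun q hq => ((hIm q).1 (hEI q hq)).1.1, fun q hq => (ht q hq).1,
      fun q hq => (ht q hq).2.1, fun q hq => ((hIm q).1 (hEI q hq)).2,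
      fun q hq => (ht q hq).2.2.1, fun q hq => (ht q hq).2.2.2⟩
  -- two edges on the same line with a common interior abscissa are equal
  have hsame : ∀ e ∈ E, ∀ f ∈ E, e.2 = f.2 → ∀ x, e.1.1 < x → x < (t e).1 → f.1.1 < x →
      x < (t f).1 → e = f := by
    intro e he f hf hl x a1 a2 a3 a4
    have se := G.sl e he
    have sf := G.sl f hf
    rcases lt_trichotomy e.1.1 f.1.1 with h | h | h
    · exact absurd (hl ▸ sf) (G.noint e he f.1 (G.sV f hf) h (by linarith))
    · exact Prod.ext (hV _ (G.sV e he) _ (G.sV f hf) h) hl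
    · exact absurd (hl ▸ se) (G.noint f hf e.1 (G.sV e he) h (by linarith))
  -- if two lines agree at two abscissae they are equal
  have hlines : ∀ (l l' : ℝ × ℝ) (x y : ℝ), x ≠ y → l.1 * x + l.2 = l'.1 * x + l'.2 →
      l.1 * y + l.2 = l'.1 * y + l'.2 → l = l' := by
    intro l l' x y hxy h1 h2
    have : (l.1 - l'.1) * (x - y) = 0 := by linarith
    have h3 : l.1 = l'.1 := by
      rcases mul_eq_zero.1 this with h | h
      · linarith
      · exact absurd (sub_eq_zero.1 h) hxy
    refine Prod.ext h3 ?_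
    rw [h3] at h1
    linarith
  have hcl : ∀ e ∈ E, ∀ f ∈ E, STCross (fun q : (ℝ × ℝ) × (ℝ × ℝ) => q.1) t
      (fun q => q.2.1) (fun q => q.2.2) e f → e.2 ≠ f.2 := by
    rintro e he f hf ⟨hne, x, a1, a2, a3, a4, -⟩ hl
    exact hne (hsame e he f hf hl x a1 a2 a3 a4)
  have h4 : ∀ e ∈ E, ∀ f ∈ E, STCross (fun q : (ℝ × ℝ) × (ℝ × ℝ) => q.1) t
      (fun q => q.2.1) (fun q => q.2.2) e f →
      ({e.1, t e, f.1, t f} : Finset (ℝ × ℝ)).card = 4 := by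
    intro e he f hf hc
    have hl := hcl e he f hf hc
    obtain ⟨hne, x, a1, a2, a3, a4, a5⟩ := hc
    simp only at a1 a2 a3 a4 a5
    have se := G.sl e he
    have sf := G.sl f hf
    have te := G.tl e he
    have tf := G.tl f hf
    have n1 : e.1 ≠ t e := by intro h; rw [h] at a1; linarith
    have n2 : e.1 ≠ t f := by intro h; rw [h] at a1; linarith
    have n3 : f.1 ≠ t e := by intro h; rw [h] at a3; linarith
    have n4 : f.1 ≠ t f := by intro h; rw [h] at a3; linarith
    have n5 : e.1 ≠ f.1 := by
      intro h
      rw [← h] at sf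
      exact hl (hlines _ _ _ _ a1.ne (se.symm.trans sf) a5)
    have n6 : t e ≠ t f := by
      intro h
      rw [← h] at tf
      exact hl (hlines _ _ _ _ a2.ne' (te.symm.trans tf) a5)
    rw [Finset.card_insert_of_notMem, Finset.card_insert_of_notMem,
      Finset.card_insert_of_notMem, Finset.card_singleton]
    · simpa using n4
    · simp only [Finset.mem_insert, Finset.mem_singleton, not_or]
      exact ⟨n3.symm, n6⟩
    · simp only [Finset.mem_insert, Finset.mem_singleton, not_or]
      exact ⟨n1, n5, n2⟩
  have hX : ((E ×ˢ E).filter fun q => STCross (fun q : (ℝ × ℝ) × (ℝ × ℝ) => q.1) t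
      (fun q => q.2.1) (fun q => q.2.2) q.1 q.2).card ≤ L.card ^ 2 := by
    rw [sq, ← Finset.card_product]
    apply Finset.card_le_card_of_injOn (fun q => (q.1.2, q.2.2))
    · intro q hq
      simp only [Finset.coe_filter, Set.mem_ofPred_eq, Finset.mem_product] at hq
      simp only [Finset.coe_product, Set.mem_prod, Finset.mem_coe]
      exact ⟨((hIm _).1 (hEI _ hq.1.1)).1.2, ((hIm _).1 (hEI _ hq.1.2)).1.2⟩
    · rintro ⟨e, f⟩ hq ⟨e', f'⟩ hq' heq
      simp only [Finset.coe_filter, Set.mem_ofPred_eq, Finset.mem_product] at hq hq'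
      obtain ⟨⟨he, hf⟩, hc⟩ := hq
      obtain ⟨⟨he', hf'⟩, hc'⟩ := hq'
      simp only [Prod.mk.injEq] at heq
      obtain ⟨l1, l2⟩ := heq
      have hl := hcl e he f hf hc
      obtain ⟨-, x, a1, a2, a3, a4, a5⟩ := hc
      obtain ⟨-, y, b1, b2, b3, b4, b5⟩ := hc'
      simp only at a1 a2 a3 a4 a5 b1 b2 b3 b4 b5
      rw [← l1, ← l2] at b5
      have hxy : x = y := by
        by_contra hxy
        exact hl (hlines _ _ _ _ hxy a5 b5)
      subst hxy
      rw [hsame e he e' he' l1 x a1 a2 b1 b2, hsame f hf f' hf' l2 x a3 a4 b3 b4]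
  have hIE : I.card ≤ E.card + L.card := by
    have h1 := Finset.card_filter_add_card_filter_not (s := I)
      (fun q => ∃ r ∈ V, q.1.1 < r.1 ∧ r.2 = q.2.1 * r.1 + q.2.2)
    have h2 : (I.filter fun q => ¬ ∃ r ∈ V, q.1.1 < r.1 ∧ r.2 = q.2.1 * r.1 + q.2.2).card
        ≤ L.card := by
      apply Finset.card_le_card_of_injOn (fun q => q.2)
      · intro q hq
        simp only [Finset.coe_filter, Set.mem_ofPred_eq] at hq
        exact ((hIm _).1 hq.1).1.2
      · intro q hq r hr hqr
        simp only [Finset.coe_filter, Set.mem_ofPred_eq] at hq hr hqr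
        obtain ⟨⟨q1, -⟩, q2⟩ := (hIm _).1 hq.1
        obtain ⟨⟨r1, -⟩, r2⟩ := (hIm _).1 hr.1
        refine Prod.ext (hV _ q1 _ r1 ?_) hqr
        rcases lt_trichotomy q.1.1 r.1.1 with h | h | h
        · exact absurd ⟨r.1, r1, h, hqr ▸ r2⟩ hq.2
        · exact h
        · exact absurd ⟨q.1, q1, h, hqr ▸ q2⟩ hr.2
    rw [← hE] at h1
    omega
  have hopt := st_optimize V.card L.card E.card _ (Nat.cast_nonneg _) (Nat.cast_nonneg _)
    (by rw [← Nat.cast_pow]; exact Nat.cast_le.2 hX) (fun p hp0 hp1 => st_sample G h4 p hp0 hp1)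
  have hIE' : (I.card : ℝ) ≤ E.card + L.card := by
    rw [← Nat.cast_add]
    exact Nat.cast_le.2 hIE
  linarith

lemma st_shear (P : Finset (ℝ × ℝ)) :
    ∃ t : ℝ, ∀ p ∈ P, ∀ q ∈ P, p.1 + t * p.2 = q.1 + t * q.2 → p = q := by
  obtain ⟨t, ht⟩ := Infinite.exists_notMem_finset
    ((P ×ˢ P).image fun r => -(r.1.1 - r.2.1) / (r.1.2 - r.2.2))
  refine ⟨t, fun p hp q hq h => ?_⟩
  by_cases h2 : p.2 = q.2
  · refine Prod.ext ?_ h2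
    rw [h2] at h
    linarith
  · exfalso
    apply ht
    rw [Finset.mem_image]
    refine ⟨(p, q), Finset.mem_product.2 ⟨hp, hq⟩, ?_⟩
    have : p.2 - q.2 ≠ 0 := sub_ne_zero.2 h2
    rw [div_eq_iff this]
    linarith

set_option maxHeartbeats 2000000 in
theorem stmt_4 :
    ∃ C : ℝ, 0 < C ∧
      ∀ (P : Finset (ℝ × ℝ)) (L : Finset (Set (ℝ × ℝ))),
        (∀ l ∈ L, IsAffineLine l) →
        ((((P ×ˢ L).filter fun pl => pl.1 ∈ pl.2).card : ℝ)
          ≤ C * ((P.card : ℝ) ^ ((2 : ℝ) / 3) * (L.card : ℝ) ^ ((2 : ℝ) / 3)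
              + (P.card : ℝ) + (L.card : ℝ))) := by
  refine ⟨6, by norm_num, fun P L hL => ?_⟩
  obtain ⟨τ, hτ⟩ := st_shear P
  set φ : ℝ × ℝ → ℝ × ℝ := fun p => (p.1 + τ * p.2, p.2) with hφ
  have hφinj : Function.Injective φ := by
    intro p q h
    simp only [hφ, Prod.mk.injEq] at h
    refine Prod.ext ?_ h.2
    have h1 := h.1
    rw [h.2] at h1
    linarith
  let good : Set (ℝ × ℝ) → Prop := fun l => ∃ u : ℝ × ℝ, ∀ p, p ∈ l ↔
    (φ p).2 = u.1 * (φ p).1 + u.2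
  have hch : ∀ l : Set (ℝ × ℝ), ∃ u : ℝ × ℝ, good l → ∀ p, p ∈ l ↔
      (φ p).2 = u.1 * (φ p).1 + u.2 := by
    intro l
    by_cases h : good l
    · obtain ⟨u, hu⟩ := h
      exact ⟨u, fun _ => hu⟩
    · exact ⟨0, fun h' => absurd h' h⟩
  choose u hu using hch
  have hbad : ∀ l ∈ L, ¬ good l → ∀ p ∈ P, ∀ q ∈ P, p ∈ l → q ∈ l → p = q := by
    intro l hl hg p hp q hq hpl hql
    obtain ⟨a, b, c, hab, rfl⟩ := hL l hl
    by_cases hz : b - a * τ = 0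
    · have hb : b = a * τ := by linarith
      have ha : a ≠ 0 := by
        rintro rfl
        apply hab
        rw [hb]; simp
      simp only [Set.mem_ofPred_eq] at hpl hql
      apply hτ p hp q hq
      apply mul_left_cancel₀ ha
      rw [hb] at hpl hql
      linarith
    · exfalso
      apply hg
      refine ⟨(-a / (b - a * τ), c / (b - a * τ)), fun p => ?_⟩
      simp only [Set.mem_ofPred_eq, hφ]
      rw [div_mul_eq_mul_div, ← add_div, eq_div_iff hz]
      constructor <;> intro h <;> linarith
  set I := (P ×ˢ L).filter fun pl => pl.1 ∈ pl.2 with hI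
  have h0 := Finset.card_filter_add_card_filter_not (s := I) (fun q => good q.2)
  have h1 : (I.filter fun q => ¬ good q.2).card ≤ L.card := by
    apply Finset.card_le_card_of_injOn (fun q => q.2)
    · intro q hq
      simp only [hI, Finset.coe_filter, Set.mem_ofPred_eq, Finset.mem_filter,
        Finset.mem_product] at hq
      exact hq.1.1.2
    · intro q hq r hr hqr
      simp only [hI, Finset.coe_filter, Set.mem_ofPred_eq, Finset.mem_filter,
        Finset.mem_product] at hq hr hqr
      exact Prod.ext (hbad q.2 hq.1.1.2 hq.2 _ hq.1.1.1 _ hr.1.1.1 hq.1.2 (hqr ▸ hr.1.2)) hqr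
  set V := P.image φ with hVd
  set M := (L.filter good).image u with hMd
  have h2 : (I.filter fun q => good q.2).card ≤
      ((V ×ˢ M).filter fun q => q.1.2 = q.2.1 * q.1.1 + q.2.2).card := by
    apply Finset.card_le_card_of_injOn (fun q => (φ q.1, u q.2))
    · intro q hq
      simp only [hI, Finset.coe_filter, Set.mem_ofPred_eq, Finset.mem_filter,
        Finset.mem_product] at hq ⊢
      obtain ⟨⟨⟨q1, q2⟩, q3⟩, q4⟩ := hq
      exact ⟨⟨Finset.mem_image_of_mem _ q1,
        Finset.mem_image_of_mem _ (Finset.mem_filter.2 ⟨q2, q4⟩)⟩, (hu _ q4 _).1 q3⟩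
    · intro q hq r hr hqr
      simp only [hI, Finset.coe_filter, Set.mem_ofPred_eq, Finset.mem_filter,
        Finset.mem_product] at hq hr
      simp only [Prod.mk.injEq] at hqr
      refine Prod.ext (hφinj hqr.1) ?_
      ext p
      rw [hu _ hq.2, hu _ hr.2, hqr.2]
  have hVinj : ∀ v ∈ V, ∀ w ∈ V, v.1 = w.1 → v = w := by
    intro v hv w hw h
    obtain ⟨p, hp, rfl⟩ := Finset.mem_image.1 hv
    obtain ⟨q, hq, rfl⟩ := Finset.mem_image.1 hw
    rw [hτ p hp q hq h]
  have h3 := st_generic V hVinj M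
  have hVc : V.card = P.card := Finset.card_image_of_injective _ hφinj
  have hMc : M.card ≤ L.card := Finset.card_image_le.trans (Finset.card_filter_le _ _)
  rw [hVc] at h3
  have hMc' : (M.card : ℝ) ≤ L.card := Nat.cast_le.2 hMc
  have hpow : (M.card : ℝ) ^ ((2 : ℝ) / 3) ≤ (L.card : ℝ) ^ ((2 : ℝ) / 3) :=
    Real.rpow_le_rpow (Nat.cast_nonneg _) hMc' (by norm_num)
  have hP0 : 0 ≤ (P.card : ℝ) ^ ((2 : ℝ) / 3) := by positivity
  have hmul := mul_le_mul_of_nonneg_left hpow hP0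
  have hL0 : 0 ≤ (L.card : ℝ) := Nat.cast_nonneg _
  have hLp : 0 ≤ (P.card : ℝ) ^ ((2 : ℝ) / 3) * (L.card : ℝ) ^ ((2 : ℝ) / 3) := by positivity
  have hfin : (I.card : ℝ) ≤
      ((V ×ˢ M).filter fun q => q.1.2 = q.2.1 * q.1.1 + q.2.2).card + L.card := by
    have : I.card ≤
      ((V ×ˢ M).filter fun q => q.1.2 = q.2.1 * q.1.1 + q.2.2).card + L.card := by omega
    rw [← Nat.cast_add]
    exact Nat.cast_le.2 this
  linarith
end

section
/- (Solymosi–Tardos cross-ratio theorem.) There exists an absolute constant c > 0 such that for every finite set A ⊆ ℝ with |A| ≥ 4, the set R(A) of cross-ratios satisfies |R(A)| ≥ c·|A|². -/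
open Finset
open scoped Classical

/-- The set of cross-ratios of quadruples of pairwise distinct elements of `A`. -/
noncomputable def crossRatioSet (A : Finset ℝ) : Finset ℝ :=
  ((A ×ˢ A ×ˢ A ×ˢ A).filter fun x =>
      x.1 ≠ x.2.1 ∧ x.1 ≠ x.2.2.1 ∧ x.1 ≠ x.2.2.2 ∧
      x.2.1 ≠ x.2.2.1 ∧ x.2.1 ≠ x.2.2.2 ∧ x.2.2.1 ≠ x.2.2.2).image
    fun x => ((x.1 - x.2.1) * (x.2.2.1 - x.2.2.2)) / ((x.1 - x.2.2.1) * (x.2.1 - x.2.2.2))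

namespace CR

/-- rank of `a` in `A` -/
noncomputable def rk (A : Finset ℝ) (a : ℝ) : ℕ := (A.filter (fun x => x < a)).card

noncomputable def cell (A : Finset ℝ) (w : ℕ) (p : ℝ × ℝ) : ℕ × ℕ :=
  (rk A p.1 / w, rk A p.2 / w)

/-- ordered triples of distinct points of `G` on which `f` is constant -/
noncomputable def T {α β : Type} (f : α → β) (G : Finset α) : Finset (α × α × α) :=
  (G ×ˢ G ×ˢ G).filter fun t =>
    t.1 ≠ t.2.1 ∧ t.1 ≠ t.2.2 ∧ t.2.1 ≠ t.2.2 ∧ f t.2.1 = f t.1 ∧ f t.2.2 = f t.1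

lemma rk_mono (A : Finset ℝ) {a b : ℝ} (h : a ≤ b) : rk A a ≤ rk A b := by
  apply Finset.card_le_card
  intro x hx
  simp only [Finset.mem_filter] at hx ⊢
  exact ⟨hx.1, hx.2.trans_le h⟩

lemma rk_strict (A : Finset ℝ) {a b : ℝ} (ha : a ∈ A) (h : a < b) : rk A a < rk A b := by
  apply Finset.card_lt_card
  rw [Finset.ssubset_iff_of_subset]
  · exact ⟨a, by simp [ha, h], by simp⟩
  · intro x hx
    simp only [Finset.mem_filter] at hx ⊢
    exact ⟨hx.1, hx.2.trans h⟩

lemma rk_inj (A : Finset ℝ) : Set.InjOn (rk A) A := by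
  intro a ha b hb h
  rcases lt_trichotomy a b with h1 | h1 | h1
  · have := rk_strict A ha h1; omega
  · exact h1
  · have := rk_strict A hb h1; omega

lemma rk_lt (A : Finset ℝ) {a : ℝ} (ha : a ∈ A) : rk A a < A.card := by
  apply Finset.card_lt_card
  rw [Finset.ssubset_iff_of_subset (Finset.filter_subset _ _)]
  exact ⟨a, ha, by simp⟩

lemma block_card (A : Finset ℝ) (w i : ℕ) (hw : 0 < w) :
    (A.filter (fun a => rk A a / w = i)).card ≤ w := by
  have h : (A.filter (fun a => rk A a / w = i)).card ≤ (Finset.Ico (i * w) (i * w + w)).card := by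
    apply Finset.card_le_card_of_injOn (rk A)
    · intro a ha
      simp only [Finset.coe_filter, Set.mem_ofPred_eq] at ha
      have h1 := Nat.div_add_mod (rk A a) w
      have h2 := Nat.mod_lt (rk A a) hw
      rw [ha.2, mul_comm] at h1
      simp only [Finset.coe_Ico, Set.mem_Ico]
      omega
    · intro a ha b hb h
      simp only [Finset.coe_filter, Set.mem_ofPred_eq] at ha hb
      exact rk_inj A ha.1 hb.1 h
  simpa using h

lemma cell_card (A : Finset ℝ) (w : ℕ) (hw : 0 < w) (c : ℕ × ℕ) :
    ((A ×ˢ A).filter (fun p => cell A w p = c)).card ≤ w ^ 2 := by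
  have : (A ×ˢ A).filter (fun p => cell A w p = c) ⊆
      (A.filter (fun a => rk A a / w = c.1)) ×ˢ (A.filter (fun a => rk A a / w = c.2)) := by
    intro p hp
    simp only [Finset.mem_filter, Finset.mem_product, cell, Prod.ext_iff] at hp ⊢
    tauto
  refine (Finset.card_le_card this).trans ?_
  rw [Finset.card_product, sq]
  exact Nat.mul_le_mul (block_card A w _ hw) (block_card A w _ hw)

lemma fib_lower {α : Type} (F : Finset α) :
    F.card ≤ (T (fun _ => ()) F).card + 2 := by
  by_cases h : F.card ≤ 2
  · omega
  obtain ⟨p, hp, q, hq, hpq⟩ := Finset.one_lt_card.1 (show 1 < F.card by omega)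
  have h1 : ((F.erase p).erase q).card ≤ (T (fun _ => ()) F).card := by
    apply Finset.card_le_card_of_injOn (fun r => (p, q, r))
    · intro r hr
      simp only [Finset.coe_erase, Set.mem_sdiff, Finset.mem_coe, Set.mem_singleton_iff] at hr
      simp only [T, Finset.coe_filter, Set.mem_ofPred_eq, Finset.mem_product]
      refine ⟨⟨hp, hq, hr.1.1⟩, hpq, fun h => hr.1.2 h.symm, fun h => hr.2 h.symm, trivial, trivial⟩
    · intro r _ r' _ h
      simpa using h
  rw [Finset.card_erase_of_mem (by simp [hq, hpq.symm]), Finset.card_erase_of_mem hp] at h1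
  omega

lemma T_lower {α β : Type} [DecidableEq β] (f : α → β) (G : Finset α) :
    G.card ≤ (T f G).card + 2 * (G.image f).card := by
  have h1 := Finset.card_eq_sum_card_image f G
  have h2 : (T f G).card = ∑ c ∈ G.image f, ((T f G).filter (fun t => f t.1 = c)).card := by
    apply Finset.card_eq_sum_card_fiberwise
    intro t ht
    simp only [T, Finset.coe_filter, Set.mem_ofPred_eq, Finset.mem_product] at ht
    simp only [Finset.coe_image]
    exact ⟨t.1, ht.1.1, rfl⟩
  rw [h1, h2, mul_comm, ← smul_eq_mul, ← Finset.sum_const, ← Finset.sum_add_distrib]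
  apply Finset.sum_le_sum
  intro c _
  refine (fib_lower _).trans ?_
  gcongr
  intro t ht
  simp only [T, Finset.mem_filter, Finset.mem_product] at ht ⊢
  grind

lemma T_upper {α β : Type} [DecidableEq β] (f : α → β) (X : Finset α) (F : Finset (Finset α))
    (hsub : ∀ G ∈ F, G ⊆ X)
    (huniq : ∀ G ∈ F, ∀ H ∈ F, ∀ p q r, p ≠ q → p ≠ r → q ≠ r → p ∈ G → q ∈ G → r ∈ G →
      p ∈ H → q ∈ H → r ∈ H → G = H)
    (m : ℕ) (hm : ∀ c, (X.filter (fun p => f p = c)).card ≤ m) :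
    ∑ G ∈ F, (T f G).card ≤ X.card * m ^ 2 := by
  rw [← Finset.card_biUnion]
  · have : F.biUnion (T f) ⊆ X.biUnion (fun p => {p} ×ˢ (X.filter (fun q => f q = f p)) ×ˢ
        (X.filter (fun q => f q = f p))) := by
      intro t ht
      simp only [Finset.mem_biUnion, T, Finset.mem_filter, Finset.mem_product,
        Finset.mem_singleton] at ht ⊢
      obtain ⟨G, hG, ht⟩ := ht
      exact ⟨t.1, hsub G hG ht.1.1, rfl, ⟨hsub G hG ht.1.2.1, ht.2.2.2.2.1⟩,
        ⟨hsub G hG ht.1.2.2, ht.2.2.2.2.2⟩⟩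
    refine (Finset.card_le_card this).trans ?_
    apply Finset.card_biUnion_le_card_mul
    intro p _
    rw [Finset.card_product, Finset.card_product, Finset.card_singleton, one_mul, sq]
    exact Nat.mul_le_mul (hm _) (hm _)
  · intro G hG H hH hne
    change Disjoint _ _
    rw [Finset.disjoint_left]
    intro t h1 h2
    simp only [T, Finset.mem_filter, Finset.mem_product] at h1 h2
    exact hne (huniq G hG H hH t.1 t.2.1 t.2.2 h1.2.1 h1.2.2.1 h1.2.2.2.1 h1.1.1 h1.1.2.1 h1.1.2.2
      h2.1.1 h2.1.2.1 h2.1.2.2)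

def Mono (G : Finset (ℝ × ℝ)) : Prop :=
  (∀ p ∈ G, ∀ q ∈ G, p.1 ≤ q.1 → p.2 ≤ q.2) ∨ (∀ p ∈ G, ∀ q ∈ G, p.1 ≤ q.1 → q.2 ≤ p.2)

lemma cells_mono (A : Finset ℝ) (G : Finset (ℝ × ℝ)) (hG : G ⊆ A ×ˢ A) (hm : Mono G)
    (w : ℕ) : (G.image (cell A w)).card ≤ 2 * (A.card / w) + 1 := by
  obtain ⟨M, hM⟩ : ∃ M, M = A.card / w := ⟨_, rfl⟩
  rw [← hM]
  have hb : ∀ p ∈ G, rk A p.1 / w ≤ M ∧ rk A p.2 / w ≤ M := by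
    intro p hp
    have := Finset.mem_product.1 (hG hp)
    rw [hM]
    exact ⟨Nat.div_le_div_right (rk_lt A this.1).le, Nat.div_le_div_right (rk_lt A this.2).le⟩
  have hmon : ∀ a b : ℝ, a ≤ b → rk A a / w ≤ rk A b / w :=
    fun a b h => Nat.div_le_div_right (rk_mono A h)
  have key : ∃ g : ℕ × ℕ → ℕ, (∀ p ∈ G, g (cell A w p) < 2 * M + 1) ∧
      ∀ p ∈ G, ∀ q ∈ G, p.1 ≤ q.1 → g (cell A w p) = g (cell A w q) → cell A w p = cell A w q := by
    rcases hm with hm | hm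
    · refine ⟨fun c => c.1 + c.2, ?_, ?_⟩
      · intro p hp
        have := hb p hp
        simp only [cell]; omega
      · intro p hp q hq h1 h2
        have h3 := hmon _ _ h1
        have h4 := hmon _ _ (hm p hp q hq h1)
        simp only [cell] at h2 ⊢
        rw [Prod.mk.injEq]; omega
    · refine ⟨fun c => c.1 + (M - c.2), ?_, ?_⟩
      · intro p hp
        have := hb p hp
        simp only [cell]
        generalize rk A p.1 / w = i at *
        generalize rk A p.2 / w = j at *
        omega
      · intro p hp q hq h1 h2
        have h3 := hmon _ _ h1
        have h4 := hmon _ _ (hm p hp q hq h1)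
        have h5 := hb p hp
        have h6 := hb q hq
        simp only [cell] at h2 ⊢
        rw [Prod.mk.injEq]; omega
  obtain ⟨g, hg1, hg2⟩ := key
  have : (G.image (cell A w)).card ≤ (Finset.range (2 * M + 1)).card := by
    apply Finset.card_le_card_of_injOn g
    · intro c hc
      simp only [Finset.coe_image, Set.mem_image, Finset.mem_coe] at hc
      obtain ⟨p, hp, rfl⟩ := hc
      simpa using hg1 p hp
    · intro c hc c' hc' h
      simp only [Finset.coe_image, Set.mem_image, Finset.mem_coe] at hc hc'
      obtain ⟨p, hp, rfl⟩ := hc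
      obtain ⟨q, hq, rfl⟩ := hc'
      rcases le_total p.1 q.1 with h1 | h1
      · exact hg2 p hp q hq h1 h
      · exact (hg2 q hq p hp h1 h.symm).symm
  simpa using this

/-- per-curve lower bound -/
lemma curve_lower (A : Finset ℝ) (G : Finset (ℝ × ℝ)) (hG : G ⊆ A ×ˢ A)
    (hs : ∃ G1 G2, Mono G1 ∧ Mono G2 ∧ G = G1 ∪ G2) (hcard : G.card ≤ A.card)
    (hk : 128 ≤ G.card) :
    (G.card : ℝ) ^ 4 ≤ 2 ^ 23 * (A.card : ℝ) ^ 3 *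
      ∑ w ∈ Finset.Icc 1 A.card, ((T (cell A w) G).card : ℝ) / (w : ℝ) ^ 4 := by
  set k := G.card with hkdef
  set n := A.card with hn
  clear_value k n
  have hk0 : (0 : ℝ) < k := by exact_mod_cast (show 0 < k by omega)
  have hn0 : (0 : ℝ) < n := by exact_mod_cast (show 0 < n by omega)
  have hkn : (k : ℝ) ≤ n := by exact_mod_cast hcard
  have hk128 : (128 : ℝ) ≤ k := by exact_mod_cast hk
  set W := ⌈32 * (n : ℝ) / k⌉₊ with hW
  have hx : (32 : ℝ) ≤ 32 * (n : ℝ) / k := by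
    rw [le_div_iff₀ hk0]; linarith
  have hW1 : 32 * (n : ℝ) / k ≤ W := Nat.le_ceil _
  have hW2 : (W : ℝ) ≤ 64 * n / k := by
    have h := (Nat.ceil_lt_add_one (show 0 ≤ 32 * (n : ℝ) / k by linarith)).le
    have e : 64 * (n : ℝ) / k = 32 * (n : ℝ) / k + 32 * (n : ℝ) / k := by ring
    rw [e]; linarith
  have hW0 : (0 : ℝ) < W := by linarith
  have hWpos : 0 < W := by exact_mod_cast hW0
  have hW3 : 2 * W ≤ n := by
    have : (2 : ℝ) * W ≤ n := by
      have h : 64 * (n : ℝ) / k ≤ n / 2 := by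
        rw [div_le_iff₀ hk0]; nlinarith
      linarith
    exact_mod_cast this
  have hT : ∀ w ∈ Finset.Ico W (2 * W), (k : ℝ) / 2 / (2 * W) ^ 4 ≤
      ((T (cell A w) G).card : ℝ) / (w : ℝ) ^ 4 := by
    intro w hw
    rw [Finset.mem_Ico] at hw
    have hw0 : 0 < w := by omega
    have hw0' : (0 : ℝ) < w := by exact_mod_cast hw0
    have hwW : (W : ℝ) ≤ w := by exact_mod_cast hw.1
    have hw2W : (w : ℝ) ≤ 2 * W := by exact_mod_cast hw.2.le
    obtain ⟨G1, G2, h1, h2, h12⟩ := hs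
    have c1 := cells_mono A G1 (by rw [h12] at hG; exact Finset.union_subset_left hG) h1 w
    have c2 := cells_mono A G2 (by rw [h12] at hG; exact Finset.union_subset_right hG) h2 w
    rw [← hn] at c1 c2
    have c3 : (G.image (cell A w)).card ≤ 4 * (n / w) + 2 := by
      rw [h12, Finset.image_union]
      refine (Finset.card_union_le _ _).trans ?_
      omega
    have c4 := T_lower (cell A w) G
    have c5 : 1 ≤ n / w := by
      rw [Nat.one_le_div_iff hw0]; omega
    have c6 : k ≤ (T (cell A w) G).card + 12 * (n / w) := by omega
    have c7 : (k : ℝ) ≤ (T (cell A w) G).card + 12 * ((n / w : ℕ) : ℝ) := by exact_mod_cast c6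
    have c8 : ((n / w : ℕ) : ℝ) ≤ (n : ℝ) / w := Nat.cast_div_le
    have c9 : (n : ℝ) / w ≤ k / 32 := by
      rw [div_le_iff₀ hw0']
      rw [div_le_iff₀ hk0] at hW1
      nlinarith
    have c10 : (k : ℝ) / 2 ≤ (T (cell A w) G).card := by linarith
    gcongr
  have hsum : (W : ℝ) * ((k : ℝ) / 2 / (2 * W) ^ 4) ≤
      ∑ w ∈ Finset.Icc 1 n, ((T (cell A w) G).card : ℝ) / (w : ℝ) ^ 4 := by
    calc (W : ℝ) * ((k : ℝ) / 2 / (2 * W) ^ 4)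
        = ∑ w ∈ Finset.Ico W (2 * W), (k : ℝ) / 2 / (2 * W) ^ 4 := by
          rw [Finset.sum_const, Nat.card_Ico, nsmul_eq_mul]
          congr 2; omega
      _ ≤ ∑ w ∈ Finset.Ico W (2 * W), ((T (cell A w) G).card : ℝ) / (w : ℝ) ^ 4 :=
          Finset.sum_le_sum hT
      _ ≤ _ := by
          apply Finset.sum_le_sum_of_subset_of_nonneg
          · intro w hw
            rw [Finset.mem_Ico] at hw
            rw [Finset.mem_Icc]; omega
          · intros; positivity
  have e1 : (W : ℝ) * ((k : ℝ) / 2 / (2 * W) ^ 4) = k / (32 * W ^ 3) := by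
    field_simp; norm_num
  rw [e1] at hsum
  have e2 : (k : ℝ) ^ 4 / (2 ^ 23 * n ^ 3) ≤ k / (32 * W ^ 3) := by
    calc (k : ℝ) ^ 4 / (2 ^ 23 * n ^ 3) = k / (32 * (64 * n / k) ^ 3) := by
          field_simp; norm_num
      _ ≤ _ := by gcongr
  have e3 := e2.trans hsum
  rw [div_le_iff₀ (by positivity)] at e3
  linarith

lemma energy (A : Finset ℝ) (F : Finset (Finset (ℝ × ℝ)))
    (hsub : ∀ G ∈ F, G ⊆ A ×ˢ A)
    (huniq : ∀ G ∈ F, ∀ H ∈ F, ∀ p q r, p ≠ q → p ≠ r → q ≠ r → p ∈ G → q ∈ G → r ∈ G →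
      p ∈ H → q ∈ H → r ∈ H → G = H)
    (hs : ∀ G ∈ F, ∃ G1 G2, Mono G1 ∧ Mono G2 ∧ G = G1 ∪ G2)
    (hcard : ∀ G ∈ F, G.card ≤ A.card) (h3 : ∀ G ∈ F, 3 ≤ G.card) :
    ∑ G ∈ F, (G.card : ℝ) ^ 4 ≤ 2 ^ 29 * (A.card : ℝ) ^ 6 := by
  set n := A.card with hn
  clear_value n
  have hXc : (A ×ˢ A).card = n ^ 2 := by rw [Finset.card_product, sq, hn]
  have hF : F.card ≤ n ^ 6 := by
    have h1 := T_upper (fun _ => ()) (A ×ˢ A) F hsub huniq (n ^ 2)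
      (fun c => (Finset.card_filter_le _ _).trans hXc.le)
    have h2 : F.card ≤ ∑ G ∈ F, (T (fun _ => ()) G).card := by
      rw [Finset.card_eq_sum_ones]
      apply Finset.sum_le_sum
      intro G hG
      have := fib_lower G
      have := h3 G hG
      omega
    rw [hXc] at h1
    calc _ ≤ _ := h2
      _ ≤ _ := h1
      _ = _ := by ring
  have hS : ∑ G ∈ F, ∑ w ∈ Finset.Icc 1 n, ((T (cell A w) G).card : ℝ) / (w : ℝ) ^ 4
      ≤ (n : ℝ) ^ 3 := by
    rw [Finset.sum_comm]
    calc _ ≤ ∑ w ∈ Finset.Icc 1 n, (n : ℝ) ^ 2 := by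
          apply Finset.sum_le_sum
          intro w hw
          have hw0 : 0 < w := (Finset.mem_Icc.1 hw).1
          have hw0' : (0 : ℝ) < w := by exact_mod_cast hw0
          rw [← Finset.sum_div, div_le_iff₀ (by positivity)]
          have h1 := T_upper (cell A w) (A ×ˢ A) F hsub huniq (w ^ 2) (cell_card A w hw0)
          rw [hXc, ← pow_mul] at h1
          exact_mod_cast h1
      _ = _ := by simp; ring
  have hterm : ∀ G ∈ F, (G.card : ℝ) ^ 4 ≤ 2 ^ 28 + 2 ^ 23 * (n : ℝ) ^ 3 *
      ∑ w ∈ Finset.Icc 1 n, ((T (cell A w) G).card : ℝ) / (w : ℝ) ^ 4 := by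
    intro G hG
    by_cases hk : 128 ≤ G.card
    · have := curve_lower A G (hsub G hG) (hs G hG) (hn ▸ hcard G hG) hk
      rw [← hn] at this
      linarith
    · have h1 : (G.card : ℝ) ≤ 128 := by exact_mod_cast (not_le.1 hk).le
      have h2 : (G.card : ℝ) ^ 4 ≤ 128 ^ 4 := by gcongr
      have h4 : 0 ≤ 2 ^ 23 * (n : ℝ) ^ 3 *
        ∑ w ∈ Finset.Icc 1 n, ((T (cell A w) G).card : ℝ) / (w : ℝ) ^ 4 := by positivity
      linarith
  have hF' : (F.card : ℝ) ≤ (n : ℝ) ^ 6 := by exact_mod_cast hF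
  calc _ ≤ _ := Finset.sum_le_sum hterm
    _ = F.card * 2 ^ 28 + 2 ^ 23 * (n : ℝ) ^ 3 *
        ∑ G ∈ F, ∑ w ∈ Finset.Icc 1 n, ((T (cell A w) G).card : ℝ) / (w : ℝ) ^ 4 := by
        rw [Finset.sum_add_distrib, ← Finset.mul_sum, Finset.sum_const, nsmul_eq_mul]
    _ ≤ (n : ℝ) ^ 6 * 2 ^ 28 + 2 ^ 23 * (n : ℝ) ^ 3 * (n : ℝ) ^ 3 := by gcongr
    _ ≤ _ := by nlinarith [show 0 ≤ (n : ℝ) ^ 6 by positivity]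

/-- `G` is the trace on `A × A` of the graph of a Möbius map. -/
def IsMob (A : Finset ℝ) (G : Finset (ℝ × ℝ)) : Prop :=
  ∃ α β γ δ : ℝ, β * γ - α * δ ≠ 0 ∧
    G = (A ×ˢ A).filter (fun p => α * p.1 * p.2 + β * p.1 + γ * p.2 + δ = 0)

lemma den_ne {α β γ δ x y : ℝ} (hD : β * γ - α * δ ≠ 0)
    (h : α * x * y + β * x + γ * y + δ = 0) : α * x + γ ≠ 0 := by
  intro h0
  apply hD
  have h1 : β * x + δ = 0 := by linear_combination h - y * h0
  linear_combination β * h0 - α * h1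

lemma diff_eq {α β γ δ x y x' y' : ℝ}
    (h : α * x * y + β * x + γ * y + δ = 0) (h' : α * x' * y' + β * x' + γ * y' + δ = 0) :
    (y - y') * ((α * x + γ) * (α * x' + γ)) = -(β * γ - α * δ) * (x - x') := by
  linear_combination (α * x' + γ) * h - (α * x + γ) * h'

lemma mob_fst_inj (A : Finset ℝ) (G : Finset (ℝ × ℝ)) (h : IsMob A G) :
    Set.InjOn Prod.fst (G : Set (ℝ × ℝ)) := by
  obtain ⟨α, β, γ, δ, hD, rfl⟩ := h
  rintro ⟨x, y⟩ hp ⟨x', y'⟩ hq h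
  simp only [Finset.coe_filter, Set.mem_ofPred_eq] at hp hq h
  subst h
  have h1 := den_ne hD hp.2
  have h2 := diff_eq hp.2 hq.2
  have h3 : (y - y') * ((α * x + γ) * (α * x + γ)) = 0 := by rw [h2]; ring
  have h4 : y - y' = 0 := by
    rcases mul_eq_zero.1 h3 with h | h
    · exact h
    · exact absurd h (mul_ne_zero h1 h1)
  rw [sub_eq_zero.1 h4]

lemma quad_zero {a b c x y z : ℝ} (hxy : x ≠ y) (hxz : x ≠ z) (hyz : y ≠ z)
    (hx : a * x ^ 2 + b * x + c = 0) (hy : a * y ^ 2 + b * y + c = 0)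
    (hz : a * z ^ 2 + b * z + c = 0) : a = 0 ∧ b = 0 ∧ c = 0 := by
  have h1 : a * (x + y) + b = 0 := by
    apply mul_left_cancel₀ (sub_ne_zero.2 hxy)
    linear_combination hx - hy
  have h2 : a * (x + z) + b = 0 := by
    apply mul_left_cancel₀ (sub_ne_zero.2 hxz)
    linear_combination hx - hz
  have ha : a = 0 := by
    apply mul_left_cancel₀ (sub_ne_zero.2 hyz)
    linear_combination h1 - h2
  subst ha
  have hb : b = 0 := by linarith
  subst hb
  exact ⟨rfl, rfl, by linarith⟩

lemma mob_sub_of_three (A : Finset ℝ) (G H : Finset (ℝ × ℝ)) (hG : IsMob A G) (hH : IsMob A H)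
    (p q r : ℝ × ℝ) (hpq : p ≠ q) (hpr : p ≠ r) (hqr : q ≠ r) (hp : p ∈ G) (hq : q ∈ G)
    (hr : r ∈ G) (hp' : p ∈ H) (hq' : q ∈ H) (hr' : r ∈ H) : G ⊆ H := by
  have inj := mob_fst_inj A G hG
  have hpq1 : p.1 ≠ q.1 := fun h => hpq (inj hp hq h)
  have hpr1 : p.1 ≠ r.1 := fun h => hpr (inj hp hr h)
  have hqr1 : q.1 ≠ r.1 := fun h => hqr (inj hq hr h)
  obtain ⟨α, β, γ, δ, hD, rfl⟩ := hG
  obtain ⟨α', β', γ', δ', hD', rfl⟩ := hH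
  simp only [Finset.mem_filter] at hp hq hr hp' hq' hr'
  have key : ∀ x y : ℝ, α * x * y + β * x + γ * y + δ = 0 →
      α' * x * y + β' * x + γ' * y + δ' = 0 →
      (β * α' - β' * α) * x ^ 2 + (β * γ' + δ * α' - β' * γ - δ' * α) * x + (δ * γ' - δ' * γ) = 0 := by
    intro x y h h'
    linear_combination (α' * x + γ') * h - (α * x + γ) * h'
  obtain ⟨e1, e2, e3⟩ := quad_zero hpq1 hpr1 hqr1 (key _ _ hp.2 hp'.2) (key _ _ hq.2 hq'.2)
    (key _ _ hr.2 hr'.2)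
  rintro ⟨x, y⟩ hz
  simp only [Finset.mem_filter] at hz ⊢
  refine ⟨hz.1, ?_⟩
  apply mul_left_cancel₀ (den_ne hD hz.2)
  linear_combination (α' * x + γ') * hz.2 - x ^ 2 * e1 - x * e2 - e3

lemma mono_part {α β γ δ : ℝ} (G : Finset (ℝ × ℝ))
    (h : ∀ p ∈ G, α * p.1 * p.2 + β * p.1 + γ * p.2 + δ = 0)
    (hpos : ∀ p ∈ G, ∀ q ∈ G, 0 < (α * p.1 + γ) * (α * q.1 + γ)) : Mono G := by
  rcases le_total 0 (β * γ - α * δ) with hD | hD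
  · right
    intro p hp q hq hpq
    have h1 := diff_eq (h p hp) (h q hq)
    have h2 := hpos p hp q hq
    by_contra hc
    push Not at hc
    nlinarith [mul_pos (sub_pos.2 hc) h2, mul_nonneg hD (sub_nonneg.2 hpq)]
  · left
    intro p hp q hq hpq
    have h1 := diff_eq (h p hp) (h q hq)
    have h2 := hpos p hp q hq
    by_contra hc
    push Not at hc
    nlinarith [mul_pos (sub_pos.2 hc) h2, mul_nonneg (neg_nonneg.2 hD) (sub_nonneg.2 hpq)]

lemma mob_split (A : Finset ℝ) (G : Finset (ℝ × ℝ)) (hG : IsMob A G) :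
    ∃ G1 G2, Mono G1 ∧ Mono G2 ∧ G = G1 ∪ G2 := by
  obtain ⟨α, β, γ, δ, hD, rfl⟩ := hG
  set G := (A ×ˢ A).filter (fun p : ℝ × ℝ => α * p.1 * p.2 + β * p.1 + γ * p.2 + δ = 0) with hG
  have hz : ∀ p ∈ G, α * p.1 * p.2 + β * p.1 + γ * p.2 + δ = 0 :=
    fun p hp => (Finset.mem_filter.1 hp).2
  refine ⟨G.filter (fun p => 0 < α * p.1 + γ), G.filter (fun p => ¬ 0 < α * p.1 + γ), ?_, ?_,
    (Finset.filter_union_filter_not_eq _ _).symm⟩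
  · apply mono_part (α := α) (β := β) (γ := γ) (δ := δ)
    · exact fun p hp => hz p (Finset.mem_filter.1 hp).1
    · intro p hp q hq
      exact mul_pos (Finset.mem_filter.1 hp).2 (Finset.mem_filter.1 hq).2
  · apply mono_part (α := α) (β := β) (γ := γ) (δ := δ)
    · exact fun p hp => hz p (Finset.mem_filter.1 hp).1
    · have hn : ∀ p ∈ G.filter (fun p => ¬ 0 < α * p.1 + γ), α * p.1 + γ < 0 := by
        intro p hp
        rw [Finset.mem_filter] at hp
        exact lt_of_le_of_ne (not_lt.1 hp.2) (den_ne hD (hz p hp.1))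
      intro p hp q hq
      exact mul_pos_of_neg_of_neg (hn p hp) (hn q hq)

noncomputable def Fam (A : Finset ℝ) : Finset (Finset (ℝ × ℝ)) :=
  (A ×ˢ A).powerset.filter (fun G => IsMob A G ∧ 3 ≤ G.card)

lemma fam_energy (A : Finset ℝ) :
    ∑ G ∈ Fam A, (G.card : ℝ) ^ 4 ≤ 2 ^ 29 * (A.card : ℝ) ^ 6 := by
  have hm : ∀ G ∈ Fam A, G ⊆ A ×ˢ A ∧ IsMob A G ∧ 3 ≤ G.card := by
    intro G hG
    simpa only [Fam, Finset.mem_filter, Finset.mem_powerset] using hG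
  apply energy
  · exact fun G hG => (hm G hG).1
  · intro G hG H hH p q r h1 h2 h3 a b c d e f
    exact Finset.Subset.antisymm
      (mob_sub_of_three A G H (hm G hG).2.1 (hm H hH).2.1 p q r h1 h2 h3 a b c d e f)
      (mob_sub_of_three A H G (hm H hH).2.1 (hm G hG).2.1 p q r h1 h2 h3 d e f a b c)
  · exact fun G hG => mob_split A G (hm G hG).2.1
  · intro G hG
    apply Finset.card_le_card_of_injOn Prod.fst
    · intro p hp
      exact (Finset.mem_product.1 ((hm G hG).1 hp)).1
    · exact mob_fst_inj A G (hm G hG).2.1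
  · exact fun G hG => (hm G hG).2.2

noncomputable def Quads (A : Finset ℝ) : Finset (ℝ × ℝ × ℝ × ℝ) :=
  (A ×ˢ A ×ˢ A ×ˢ A).filter fun x =>
      x.1 ≠ x.2.1 ∧ x.1 ≠ x.2.2.1 ∧ x.1 ≠ x.2.2.2 ∧
      x.2.1 ≠ x.2.2.1 ∧ x.2.1 ≠ x.2.2.2 ∧ x.2.2.1 ≠ x.2.2.2

noncomputable def cr (x : ℝ × ℝ × ℝ × ℝ) : ℝ :=
  ((x.1 - x.2.1) * (x.2.2.1 - x.2.2.2)) / ((x.1 - x.2.2.1) * (x.2.1 - x.2.2.2))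

lemma exists_mob {a b c d a' b' c' d' : ℝ} (hab : a ≠ b) (hac : a ≠ c) (hbc : b ≠ c)
    (hbd : b ≠ d) (hab' : a' ≠ b') (hac' : a' ≠ c') (hbc' : b' ≠ c') (hbd' : b' ≠ d')
    (h : ((a - b) * (c - d)) / ((a - c) * (b - d)) =
      ((a' - b') * (c' - d')) / ((a' - c') * (b' - d'))) :
    ∃ α β γ δ : ℝ, β * γ - α * δ ≠ 0 ∧ α * a * a' + β * a + γ * a' + δ = 0 ∧
      α * b * b' + β * b + γ * b' + δ = 0 ∧ α * c * c' + β * c + γ * c' + δ = 0 ∧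
      α * d * d' + β * d + γ * d' + δ = 0 := by
  rw [div_eq_div_iff (mul_ne_zero (sub_ne_zero.2 hac) (sub_ne_zero.2 hbd))
    (mul_ne_zero (sub_ne_zero.2 hac') (sub_ne_zero.2 hbd'))] at h
  obtain ⟨u, hu⟩ : ∃ u, u = (a - b) * (a' - c') := ⟨_, rfl⟩
  obtain ⟨v, hv⟩ : ∃ v, v = (a' - b') * (a - c) := ⟨_, rfl⟩
  have hu0 : u ≠ 0 := hu ▸ mul_ne_zero (sub_ne_zero.2 hab) (sub_ne_zero.2 hac')
  have hv0 : v ≠ 0 := hv ▸ mul_ne_zero (sub_ne_zero.2 hab') (sub_ne_zero.2 hac)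
  refine ⟨u - v, -u * b' + v * c', -u * c + v * b, u * c * b' - v * c' * b, ?_, ?_, ?_, ?_, ?_⟩
  · have : (-u * b' + v * c') * (-u * c + v * b) - (u - v) * (u * c * b' - v * c' * b) =
        -(u * v * ((b - c) * (b' - c'))) := by ring
    rw [this]
    exact neg_ne_zero.2 (mul_ne_zero (mul_ne_zero hu0 hv0)
      (mul_ne_zero (sub_ne_zero.2 hbc) (sub_ne_zero.2 hbc')))
  · subst hu hv; ring
  · ring
  · ring
  · subst hu hv; linear_combination h

noncomputable def Pairs (A : Finset ℝ) : Finset ((ℝ × ℝ × ℝ × ℝ) × (ℝ × ℝ × ℝ × ℝ)) :=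
  (Quads A ×ˢ Quads A).filter fun z => cr z.1 = cr z.2

lemma pairs_card (A : Finset ℝ) :
    (Pairs A).card ≤ ∑ G ∈ Fam A, G.card ^ 4 := by
  have h1 : (Pairs A).card ≤ ((Fam A).biUnion (fun G => G ×ˢ G ×ˢ G ×ˢ G)).card := by
    apply Finset.card_le_card_of_injOn (fun z => ((z.1.1, z.2.1), (z.1.2.1, z.2.2.1),
      (z.1.2.2.1, z.2.2.2.1), (z.1.2.2.2, z.2.2.2.2)))
    · intro z hz
      replace hz := Finset.mem_coe.1 hz
      obtain ⟨⟨a, b, c, d⟩, ⟨a', b', c', d'⟩⟩ := z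
      rw [Pairs, Finset.mem_filter, Finset.mem_product, Quads, Finset.mem_filter,
        Finset.mem_filter] at hz
      simp only [cr, Finset.mem_product] at hz
      obtain ⟨⟨⟨⟨ha, hb, hc, hd⟩, n1, n2, n3, n4, n5, n6⟩,
        ⟨⟨ha', hb', hc', hd'⟩, n1', n2', n3', n4', n5', n6'⟩⟩, h⟩ := hz
      obtain ⟨α, β, γ, δ, hD, e1, e2, e3, e4⟩ := exists_mob n1 n2 n4 n5 n1' n2' n4' n5' h
      simp only [Finset.coe_biUnion, Set.mem_iUnion, Finset.mem_coe, Finset.mem_product]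
      set G := (A ×ˢ A).filter (fun p : ℝ × ℝ => α * p.1 * p.2 + β * p.1 + γ * p.2 + δ = 0)
        with hG
      have m1 : (a, a') ∈ G := by simp [hG, ha, ha', e1]
      have m2 : (b, b') ∈ G := by simp [hG, hb, hb', e2]
      have m3 : (c, c') ∈ G := by simp [hG, hc, hc', e3]
      have m4 : (d, d') ∈ G := by simp [hG, hd, hd', e4]
      refine ⟨G, ?_, m1, m2, m3, m4⟩
      simp only [Fam, Finset.mem_filter, Finset.mem_powerset]
      refine ⟨Finset.filter_subset _ _, ⟨α, β, γ, δ, hD, hG⟩, ?_⟩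
      have : 2 < G.card := Finset.two_lt_card.2 ⟨_, m1, _, m2, _, m3, by simp [n1], by simp [n2],
        by simp [n4]⟩
      omega
    · rintro ⟨⟨a, b, c, d⟩, ⟨a', b', c', d'⟩⟩ _ ⟨⟨a2, b2, c2, d2⟩, ⟨a2', b2', c2', d2'⟩⟩ _ h
      simp only [Prod.mk.injEq] at h ⊢
      tauto
  refine h1.trans (Finset.card_biUnion_le.trans ?_)
  apply Finset.sum_le_sum
  intro G _
  simp only [Finset.card_product]
  apply le_of_eq; ring

lemma quads_card (A : Finset ℝ) : A.card.descFactorial 4 ≤ (Quads A).card := by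
  have h : Fintype.card (Fin 4 ↪ A) = A.card.descFactorial 4 := by
    rw [Fintype.card_embedding_eq]; simp
  rw [← h, ← Finset.card_univ]
  apply Finset.card_le_card_of_injOn
    (fun e : Fin 4 ↪ A => ((e 0 : ℝ), (e 1 : ℝ), (e 2 : ℝ), (e 3 : ℝ)))
  · intro e _
    have hne : ∀ i j, i ≠ j → (e i : ℝ) ≠ e j := by
      intro i j hij h
      exact hij (e.injective (Subtype.ext h))
    simp only [Quads, Finset.coe_filter, Finset.mem_product, Set.mem_ofPred_eq]
    refine ⟨⟨(e 0).2, (e 1).2, (e 2).2, (e 3).2⟩, ?_, ?_, ?_, ?_, ?_, ?_⟩ <;>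
      exact hne _ _ (by decide)
  · intro e _ e' _ h
    simp only [Prod.mk.injEq] at h
    ext i
    fin_cases i
    · exact h.1
    · exact h.2.1
    · exact h.2.2.1
    · exact h.2.2.2

lemma quads_lower (A : Finset ℝ) (hA : 4 ≤ A.card) :
    (A.card : ℝ) ^ 4 ≤ 64 * (Quads A).card := by
  have h := quads_card A
  obtain ⟨m, hm⟩ := Nat.exists_eq_add_of_le hA
  rw [hm] at h ⊢
  have h2 : (4 + m).descFactorial 4 = (m + 1) * ((m + 2) * ((m + 3) * (m + 4))) := by
    simp only [Nat.descFactorial]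
    rw [show 4 + m - 3 = m + 1 by omega, show 4 + m - 2 = m + 2 by omega,
      show 4 + m - 1 = m + 3 by omega, show 4 + m - 0 = m + 4 by omega]
    ring
  rw [h2] at h
  have h3 : ((m : ℝ) + 1) * ((m + 2) * ((m + 3) * (m + 4))) ≤ (Quads A).card := by
    exact_mod_cast h
  have hm0 : (0 : ℝ) ≤ m := Nat.cast_nonneg m
  push_cast
  have h4 : (4 + (m : ℝ)) ^ 4 ≤ 64 * (((m : ℝ) + 1) * ((m + 2) * ((m + 3) * (m + 4)))) := by
    have : 0 ≤ 64 * (((m : ℝ) + 1) * ((m + 2) * ((m + 3) * (m + 4)))) - (4 + (m : ℝ)) ^ 4 := by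
      ring_nf; positivity
    linarith
  linarith

lemma cs (A : Finset ℝ) :
    (Quads A).card ^ 2 ≤ ((Quads A).image cr).card * (Pairs A).card := by
  have h1 := Finset.card_eq_sum_card_image cr (Quads A)
  have h2 : (Pairs A).card = ∑ c ∈ (Quads A).image cr,
      ((Quads A).filter (fun x => cr x = c)).card ^ 2 := by
    rw [Finset.card_eq_sum_card_fiberwise (f := fun z => cr z.1) (t := (Quads A).image cr)]
    · apply Finset.sum_congr rfl
      intro c _
      rw [sq, ← Finset.card_product]
      congr 1
      ext z
      simp only [Pairs, Finset.mem_filter, Finset.mem_product]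
      grind
    · intro z hz
      simp only [Pairs, Finset.coe_filter, Finset.mem_product, Set.mem_ofPred_eq] at hz
      exact Finset.mem_coe.2 (Finset.mem_image_of_mem _ hz.1.1)
  rw [h1, h2]
  exact sq_sum_le_card_mul_sum_sq

end CR

theorem stmt_7 :
    ∃ c : ℝ, 0 < c ∧
      ∀ A : Finset ℝ, 4 ≤ A.card →
        c * (A.card : ℝ) ^ 2 ≤ ((crossRatioSet A).card : ℝ) := by
  refine ⟨1 / 2 ^ 41, by positivity, ?_⟩
  intro A hA
  have hR : crossRatioSet A = (CR.Quads A).image CR.cr := rfl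
  have h1 := CR.quads_lower A hA
  have h2 : ((CR.Quads A).card : ℝ) ^ 2 ≤ (crossRatioSet A).card * (CR.Pairs A).card := by
    rw [hR]; exact_mod_cast CR.cs A
  have h3 : ((CR.Pairs A).card : ℝ) ≤ 2 ^ 29 * (A.card : ℝ) ^ 6 := by
    refine le_trans ?_ (CR.fam_energy A)
    exact_mod_cast CR.pairs_card A
  have hn : (0 : ℝ) < A.card := by exact_mod_cast (show 0 < A.card by omega)
  have h4 : ((A.card : ℝ) ^ 4) ^ 2 ≤ (64 * (CR.Quads A).card) ^ 2 := by gcongr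
  have h5 : ((crossRatioSet A).card : ℝ) * (CR.Pairs A).card ≤
      (crossRatioSet A).card * (2 ^ 29 * (A.card : ℝ) ^ 6) := by gcongr
  have h6 : (A.card : ℝ) ^ 2 * (A.card : ℝ) ^ 6 ≤
      (2 ^ 41 * (crossRatioSet A).card) * (A.card : ℝ) ^ 6 := by nlinarith
  have h7 := le_of_mul_le_mul_right h6 (by positivity)
  linarith
end
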